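/- Let p ∈ [1, ∞), ε ∈ (0, 1), and B ≥ 1. Let Φ be a Φ-function such that the function t ↦ Φ(t)t^{-p} is increasing on (0, ∞) and there is q ∈ [p, ∞) such that t ↦ Φ(t)t^{-q} is decreasing on (0, ∞). Then there is a constant C depending only on Φ and ε such that: for every N-dimensional subspace X_N of C(Ω) satisfying ‖f‖_∞ ≤ √(BN)·‖f‖_{L²(μ)} for all f ∈ X_N, there exist a natural number m ≤ C·Φ((BN)^{1/min{p,2}})·(log₂ 2BN)³ and points x₁, …, x_m ∈ Ω such that (1−ε)‖f‖_Φ ≤ ‖f‖_{Φ,x} ≤ (1+ε)‖f‖_Φ for all f ∈ X_N. -/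

import Mathlib

open MeasureTheory

noncomputable section

/-- The sup-norm (uniform norm) `‖f‖_∞ = sup_{x ∈ Ω} |f x|` of a real-valued function. -/
def supNorm {Ω : Type*} (f : Ω → ℝ) : ℝ := ⨆ x, |f x|

/-- The Luxemburg functional `‖f‖_Φ = inf {λ > 0 : ∫ Φ(|f|/λ) dμ ≤ 1}`. -/
def luxNorm {Ω : Type*} [MeasurableSpace Ω] (μ : Measure Ω) (Φ : ℝ → ℝ) (f : Ω → ℝ) : ℝ :=
  sInf {lam : ℝ | 0 < lam ∧ ∫ x, Φ (|f x| / lam) ∂μ ≤ 1}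

/-- The discrete Luxemburg functional `‖f‖_{Φ,x}` with respect to the uniform discrete
probability measure `(1/m) ∑_{j=1}^m δ_{x_j}`. -/
def discLuxNorm {Ω : Type*} (Φ : ℝ → ℝ) {m : ℕ} (x : Fin m → Ω) (f : Ω → ℝ) : ℝ :=
  sInf {lam : ℝ | 0 < lam ∧ (∑ j, Φ (|f (x j)| / lam)) / (m : ℝ) ≤ 1}

/-- The weighted discrete Luxemburg functional `‖f‖_{Φ,x,λ}` with respect to the discrete
probability measure `∑_{j=1}^m λ_j δ_{x_j}`. -/
def wDiscLuxNorm {Ω : Type*} (Φ : ℝ → ℝ) {m : ℕ} (x : Fin m → Ω) (w : Fin m → ℝ)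
    (f : Ω → ℝ) : ℝ :=
  sInf {lam : ℝ | 0 < lam ∧ (∑ j, w j * Φ (|f (x j)| / lam)) ≤ 1}

/-- `Φ : [0,∞) → [0,∞)` is a Φ-prefunction: increasing, `Φ(0) = 0`, `Φ(0+) = 0`,
`Φ(∞) = ∞` (stated for a function on `ℝ`, with the relevant conditions on `[0,∞)`). -/
structure IsPhiPrefun (Φ : ℝ → ℝ) : Prop where
  mono : MonotoneOn Φ (Set.Ici 0)
  map_zero : Φ 0 = 0
  nonneg : ∀ t : ℝ, 0 ≤ t → 0 ≤ Φ t
  tendsto_zero : Filter.Tendsto Φ (nhdsWithin 0 (Set.Ioi 0)) (nhds 0)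
  tendsto_atTop : Filter.Tendsto Φ Filter.atTop Filter.atTop

/-- `Φ ∈ (aInc)_p` with constant `a`: `t ↦ Φ(t) t^{-p}` is almost increasing on `(0,∞)`. -/
def AIncP (Φ : ℝ → ℝ) (p a : ℝ) : Prop :=
  ∀ s t : ℝ, 0 < s → s < t → Φ s / s ^ p ≤ a * (Φ t / t ^ p)

/-- `Φ ∈ (Inc)_p` : `t ↦ Φ(t) t^{-p}` is increasing on `(0,∞)`. -/
def IncP (Φ : ℝ → ℝ) (p : ℝ) : Prop :=
  ∀ s t : ℝ, 0 < s → s < t → Φ s / s ^ p ≤ Φ t / t ^ p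

/-- `Φ ∈ (Dec)_q` : `t ↦ Φ(t) t^{-q}` is decreasing on `(0,∞)`. -/
def DecQ (Φ : ℝ → ℝ) (q : ℝ) : Prop :=
  ∀ s t : ℝ, 0 < s → s < t → Φ t / t ^ q ≤ Φ s / s ^ q

/-- `Φ ∈ (aDec)_q` with constant `b`: `t ↦ Φ(t) t^{-q}` is almost decreasing on `(0,∞)`. -/
def ADecQ (Φ : ℝ → ℝ) (q b : ℝ) : Prop :=
  ∀ s t : ℝ, 0 < s → s < t → Φ t / t ^ q ≤ b * (Φ s / s ^ q)

/-- `t ↦ Φ(t) t^{-p}` is almost increasing with constant `a` on `(t_*, ∞)`. -/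
def AIncPOn (Φ : ℝ → ℝ) (p a tstar : ℝ) : Prop :=
  ∀ s t : ℝ, tstar < s → s < t → Φ s / s ^ p ≤ a * (Φ t / t ^ p)

/-- `t ↦ Φ(t) t^{-q}` is almost decreasing with constant `b` on `(t_*, ∞)`. -/
def ADecQOn (Φ : ℝ → ℝ) (q b tstar : ℝ) : Prop :=
  ∀ s t : ℝ, tstar < s → s < t → Φ t / t ^ q ≤ b * (Φ s / s ^ q)

/-- Entropy numbers `e_n(F, d)` of a set `F` with respect to a distance-like function `dd`:
the infimum of `ε > 0` such that `F` can be covered by `2^{2^n}` (one, for `n = 0`)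
`ε`-balls centered in `F`. -/
def entropyNumD {X : Type*} (dd : X → X → ℝ) (F : Set X) (n : ℕ) : ℝ :=
  sInf {ε : ℝ | 0 < ε ∧ ∃ T : Finset X, ↑T ⊆ F ∧
    T.card ≤ (if n = 0 then 1 else 2 ^ 2 ^ n) ∧ ∀ f ∈ F, ∃ g ∈ T, dd f g < ε}

/-- Sampling numbers `ϱ_m(F, ‖·‖)`: recovery by linear methods from samples at `m` points. -/
def sampNum {Ω : Type*} (nrm : (Ω → ℝ) → ℝ) (F : Set (Ω → ℝ)) (m : ℕ) : ℝ :=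
  sInf {r : ℝ | ∃ (x : Fin m → Ω) (T : (Fin m → ℝ) →ₗ[ℝ] (Ω → ℝ)),
    r = ⨆ f ∈ F, nrm (fun y => f y - T (fun j => f (x j)) y)}

/-- Modified sampling numbers `ϱ*_m(F, ‖·‖)`: recovery by arbitrary methods mapping into a
subspace of dimension at most `m`, from samples at `m` points. -/
def sampNumStar {Ω : Type*} (nrm : (Ω → ℝ) → ℝ) (F : Set (Ω → ℝ)) (m : ℕ) : ℝ :=
  sInf {r : ℝ | ∃ (x : Fin m → Ω) (Y : Submodule ℝ (Ω → ℝ)), Module.finrank ℝ Y ≤ m ∧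
    ∃ T : (Fin m → ℝ) → Ω → ℝ, (∀ v, T v ∈ Y) ∧
    r = ⨆ f ∈ F, nrm (fun y => f y - T (fun j => f (x j)) y)}

/-- Kolmogorov width `d_N(F, ‖·‖_∞)` : infimum over `N`-dimensional subspaces of `C(Ω)` of the
worst-case best approximation error in the uniform norm. -/
def kolWidth {Ω : Type*} [TopologicalSpace Ω] (F : Set (Ω → ℝ)) (N : ℕ) : ℝ :=
  sInf {r : ℝ | ∃ X : Submodule ℝ (Ω → ℝ), Module.finrank ℝ X = N ∧
    (∀ u ∈ X, Continuous u) ∧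
    r = ⨆ f ∈ F, sInf ((fun u => supNorm (fun y => f y - u y)) '' (X : Set (Ω → ℝ)))}

end

noncomputable section
/-- sign of a boolean -/
def sgnB (b : Bool) : ℝ := if b then 1 else -1

lemma sign_mgf {ι : Type*} [Fintype ι] [DecidableEq ι] (a : ι → ℝ) (l : ℝ) :
    ∑ σ : ι → Bool, Real.exp (l * ∑ i, sgnB (σ i) * a i)
      ≤ 2 ^ (Fintype.card ι) * Real.exp (l ^ 2 * (∑ i, a i ^ 2) / 2) := by
  have h1 : ∀ σ : ι → Bool, Real.exp (l * ∑ i, sgnB (σ i) * a i)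
      = ∏ i, Real.exp (l * (sgnB (σ i) * a i)) := by
    intro σ
    rw [← Real.exp_sum, Finset.mul_sum]
  simp_rw [h1]
  have h2 := (Finset.prod_univ_sum (fun _ : ι => (Finset.univ : Finset Bool))
    (fun i b => Real.exp (l * (sgnB b * a i))))
  rw [Fintype.piFinset_univ] at h2
  rw [← h2]
  have h3 : ∀ i, ∑ b : Bool, Real.exp (l * (sgnB b * a i)) ≤ 2 * Real.exp (l ^ 2 * a i ^ 2 / 2) := by
    intro i
    have := Real.cosh_le_exp_half_sq (l * a i)
    rw [Real.cosh_eq] at this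
    simp only [Fintype.sum_bool, sgnB]
    norm_num
    have e : (l * a i) ^ 2 / 2 = l ^ 2 * a i ^ 2 / 2 := by ring
    rw [e] at this
    linarith
  calc _ ≤ ∏ i, (2 * Real.exp (l ^ 2 * a i ^ 2 / 2)) :=
        Finset.prod_le_prod (fun i _ => Finset.sum_nonneg (fun b _ => (Real.exp_pos _).le)) (fun i _ => h3 i)
    _ = _ := by
      rw [Finset.prod_mul_distrib, ← Real.exp_sum, Finset.prod_const, Finset.card_univ]
      congr 2
      rw [Finset.mul_sum, Finset.sum_div]

open Classical in
lemma sign_tail {ι : Type*} [Fintype ι] [DecidableEq ι] (a : ι → ℝ) (u b : ℝ) (hu : 0 ≤ u) (hb : 0 ≤ b)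
    (hab : ∑ i, a i ^ 2 ≤ b ^ 2) :
    ((Finset.univ.filter (fun σ : ι → Bool => u * b < |∑ i, sgnB (σ i) * a i|)).card : ℝ)
      ≤ 2 ^ (Fintype.card ι) * (2 * Real.exp (-(u ^ 2 / 2))) := by
  rcases hb.eq_or_lt with hb0 | hb0
  · have ha : ∀ i, a i = 0 := by
      intro i
      have h1 : a i ^ 2 ≤ ∑ i, a i ^ 2 := Finset.single_le_sum (f := fun i => a i ^ 2) (fun i _ => sq_nonneg _) (Finset.mem_univ i)
      have : a i ^ 2 = 0 := le_antisymm (by rw [← hb0] at hab; simpa using h1.trans hab) (sq_nonneg _)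
      simpa using this
    have : (Finset.univ.filter (fun σ : ι → Bool => u * b < |∑ i, sgnB (σ i) * a i|)) = ∅ := by
      apply Finset.filter_eq_empty_iff.2
      intro σ _
      simp [ha, ← hb0]
    rw [this]
    simp
    positivity
  · set l := u / b with hl
    set S := (Finset.univ.filter (fun σ : ι → Bool => u * b < |∑ i, sgnB (σ i) * a i|)) with hS
    have hl0 : 0 ≤ l := by positivity
    have key : (S.card : ℝ) * Real.exp (u ^ 2) ≤ 2 * (2 ^ (Fintype.card ι) * Real.exp (u ^ 2 / 2)) := by
      have hpt : ∀ σ ∈ S, Real.exp (u ^ 2) ≤ Real.exp (l * ∑ i, sgnB (σ i) * a i) + Real.exp ((-l) * ∑ i, sgnB (σ i) * a i) := by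
        intro σ hσ
        have hσ' : u * b < |∑ i, sgnB (σ i) * a i| := (Finset.mem_filter.1 hσ).2
        have e : l * (u * b) = u ^ 2 := by rw [hl]; field_simp
        have h1 : u ^ 2 ≤ |l * ∑ i, sgnB (σ i) * a i| := by
          rw [abs_mul, abs_of_nonneg hl0, ← e]
          exact mul_le_mul_of_nonneg_left hσ'.le hl0
        rcases le_abs.1 h1 with h | h
        · have := Real.exp_le_exp.2 h
          have := Real.exp_pos ((-l) * ∑ i, sgnB (σ i) * a i)
          linarith
        · rw [← neg_mul] at h
          have := Real.exp_le_exp.2 h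
          have := Real.exp_pos (l * ∑ i, sgnB (σ i) * a i)
          linarith
      have hm : l ^ 2 * (∑ i, a i ^ 2) / 2 ≤ u ^ 2 / 2 := by
        have : l ^ 2 * (∑ i, a i ^ 2) ≤ l ^ 2 * b ^ 2 := mul_le_mul_of_nonneg_left hab (sq_nonneg _)
        have e : l ^ 2 * b ^ 2 = u ^ 2 := by rw [hl]; field_simp
        linarith
      have hm' : Real.exp (l ^ 2 * (∑ i, a i ^ 2) / 2) ≤ Real.exp (u ^ 2 / 2) := Real.exp_le_exp.2 hm
      have hc : (0:ℝ) < 2 ^ (Fintype.card ι) := by positivity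
      calc (S.card : ℝ) * Real.exp (u ^ 2) = ∑ σ ∈ S, Real.exp (u ^ 2) := by simp
        _ ≤ ∑ σ ∈ S, (Real.exp (l * ∑ i, sgnB (σ i) * a i) + Real.exp ((-l) * ∑ i, sgnB (σ i) * a i)) :=
            Finset.sum_le_sum hpt
        _ ≤ ∑ σ : ι → Bool, (Real.exp (l * ∑ i, sgnB (σ i) * a i) + Real.exp ((-l) * ∑ i, sgnB (σ i) * a i)) :=
            Finset.sum_le_sum_of_subset_of_nonneg (Finset.subset_univ _) (fun _ _ _ => by positivity)
        _ ≤ _ := by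
            rw [Finset.sum_add_distrib]
            have A := sign_mgf a l
            have B := sign_mgf a (-l)
            rw [neg_sq] at B
            have := mul_le_mul_of_nonneg_left hm' hc.le
            linarith
    have e2 : Real.exp (u ^ 2) = Real.exp (u ^ 2 / 2) * Real.exp (u ^ 2 / 2) := by
      rw [← Real.exp_add]; ring_nf
    rw [Real.exp_neg]
    have hp := Real.exp_pos (u ^ 2 / 2)
    rw [e2, ← mul_assoc, ← mul_assoc] at key
    have := le_of_mul_le_mul_right key hp
    rw [← div_eq_mul_inv, mul_div_assoc', le_div_iff₀ hp]
    linarith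
end

noncomputable section

/-- Data for a chaining argument for a class of functions `φ c`, `c ∈ F`, on `V`. -/
structure ChainData (V E : Type*) where
  F : Set E
  φ : E → V → ℝ
  rel : ℕ → E → E → Prop
  w : ℕ → ℝ
  a : ℕ → ℝ
  c0 : E
  hw : ∀ k, 0 ≤ w k
  hc0 : c0 ∈ F
  hφ0 : ∀ v, φ c0 v = 0
  hφn : ∀ c v, 0 ≤ φ c v
  hroot : ∀ c ∈ F, rel 0 c c0
  hlip : ∀ k, ∀ c ∈ F, ∀ c' ∈ F, rel k c c' →
    ∀ v, (φ c v - φ c' v) ^ 2 ≤ w k ^ 2 * (φ c v + φ c' v)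
  hcov : ∀ k, ∀ g ∈ F, ∃ T : Finset E, (∀ h ∈ T, h ∈ F) ∧ (T.card : ℝ) ≤ Real.exp (a k) ∧
    (∀ h ∈ T, rel k h g) ∧ ∀ f ∈ F, rel k f g → ∃ h ∈ T, rel (k + 1) f h

/-- chaining thresholds -/
def ChainData.u {V E : Type*} (D : ChainData V E) (k : ℕ) : ℝ :=
  Real.sqrt (2 * (∑ i ∈ Finset.range (k + 1), D.a i) + 2 * (k + 4))

/-- chaining bound -/
def ChainData.bd {V E : Type*} (D : ChainData V E) (L n : ℕ) : ℝ :=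
  (∑ k ∈ Finset.range L, D.u k * D.w k) + Real.sqrt n * D.w L

/-- the signed sum -/
def sgnSum {V E ι : Type*} [Fintype ι] (D : ChainData V E) (x : ι × Bool → V) (σ : ι → Bool)
    (c : E) : ℝ := ∑ i, sgnB (σ i) * (D.φ c (x (i, true)) - D.φ c (x (i, false)))

lemma link_sq {V E ι : Type*} [Fintype ι] (D : ChainData V E) (x : ι × Bool → V)
    (hx : ∀ c ∈ D.F, ∑ z, D.φ c (x z) ≤ 4 * (Fintype.card ι : ℝ)) (k : ℕ) (c c' : E)
    (hc : c ∈ D.F) (hc' : c' ∈ D.F) (hr : D.rel k c c') :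
    ∑ i, ((D.φ c (x (i, true)) - D.φ c (x (i, false))) -
      (D.φ c' (x (i, true)) - D.φ c' (x (i, false)))) ^ 2
      ≤ (4 * Real.sqrt (Fintype.card ι) * D.w k) ^ 2 := by
  have hl := D.hlip k c hc c' hc' hr
  have h1 : ∀ i, ((D.φ c (x (i, true)) - D.φ c (x (i, false))) -
      (D.φ c' (x (i, true)) - D.φ c' (x (i, false)))) ^ 2 ≤
      ∑ b : Bool, 2 * (D.w k ^ 2 * (D.φ c (x (i, b)) + D.φ c' (x (i, b)))) := by
    intro i
    have h1 := hl (x (i, true))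
    have h2 := hl (x (i, false))
    simp only [Fintype.sum_bool]
    nlinarith [sq_nonneg ((D.φ c (x (i, true)) - D.φ c' (x (i, true))) + (D.φ c (x (i, false)) - D.φ c' (x (i, false))))]
  calc _ ≤ ∑ i, ∑ b : Bool, 2 * (D.w k ^ 2 * (D.φ c (x (i, b)) + D.φ c' (x (i, b)))) :=
        Finset.sum_le_sum (fun i _ => h1 i)
    _ = 2 * (D.w k ^ 2 * (∑ z, D.φ c (x z) + ∑ z, D.φ c' (x z))) := by
        rw [← Fintype.sum_prod_type' (f := fun i b => 2 * (D.w k ^ 2 * (D.φ c (x (i, b)) + D.φ c' (x (i, b)))))]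
        simp only [Prod.mk.eta]
        rw [← Finset.mul_sum, ← Finset.mul_sum, Finset.sum_add_distrib]
    _ ≤ 2 * (D.w k ^ 2 * (4 * (Fintype.card ι : ℝ) + 4 * (Fintype.card ι : ℝ))) := by
        gcongr
        · exact hx c hc
        · exact hx c' hc'
    _ = _ := by
        rw [mul_pow, mul_pow, Real.sq_sqrt (by positivity)]
        ring

lemma sgnSum_sub {V E ι : Type*} [Fintype ι] (D : ChainData V E) (x : ι × Bool → V) (σ : ι → Bool)
    (c c' : E) : sgnSum D x σ c - sgnSum D x σ c' =
    ∑ i, sgnB (σ i) * ((D.φ c (x (i, true)) - D.φ c (x (i, false))) -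
      (D.φ c' (x (i, true)) - D.φ c' (x (i, false)))) := by
  simp only [sgnSum]
  rw [← Finset.sum_sub_distrib]
  exact Finset.sum_congr rfl (fun i _ => by ring)

open Classical in
/-- one link level: number of bad signs. -/
lemma halving_aux {V E ι : Type*} [Fintype ι] [DecidableEq ι] (D : ChainData V E) (x : ι × Bool → V)
    (hx : ∀ c ∈ D.F, ∑ z, D.φ c (x z) ≤ 4 * (Fintype.card ι : ℝ)) (L : ℕ) :
    ∃ (T : Finset E) (Bad : Finset (ι → Bool)),
      (∀ c ∈ T, c ∈ D.F) ∧ (T.card : ℝ) ≤ Real.exp (∑ i ∈ Finset.range L, D.a i) ∧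
      (∀ f ∈ D.F, ∃ h ∈ T, D.rel L f h) ∧
      (Bad.card : ℝ) ≤ 2 ^ (Fintype.card ι) * ((1 / 4) * (1 - (1 / 2) ^ L)) ∧
      ∀ σ, σ ∉ Bad → ∀ c ∈ T, |sgnSum D x σ c| ≤
        4 * Real.sqrt (Fintype.card ι) * (∑ k ∈ Finset.range L, D.u k * D.w k) := by
  induction L with
  | zero =>
    refine ⟨{D.c0}, ∅, ?_, ?_, ?_, ?_, ?_⟩
    · simpa using D.hc0
    · simp
    · intro f hf; exact ⟨D.c0, by simp, D.hroot f hf⟩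
    · simp
    · intro σ _ c hc
      rw [Finset.mem_singleton] at hc
      subst hc
      simp [sgnSum, D.hφ0]
  | succ L ih =>
    obtain ⟨T, Bad, hTF, hTc, hTn, hBc, hB⟩ := ih
    have hcov := D.hcov L
    choose! net hnF hnc hnr hnn using hcov
    set P : Finset (E × E) := T.biUnion (fun g => (net g).image (fun h => (g, h))) with hP
    set bad : E × E → Finset (ι → Bool) := fun gh => Finset.univ.filter
      (fun σ => D.u L * (4 * Real.sqrt (Fintype.card ι) * D.w L) < |sgnSum D x σ gh.2 - sgnSum D x σ gh.1|) with hbad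
    have hPm : ∀ gh ∈ P, gh.1 ∈ T ∧ gh.2 ∈ net gh.1 := by
      intro gh hgh
      simp only [hP, Finset.mem_biUnion, Finset.mem_image] at hgh
      obtain ⟨g, hg, h, hh, rfl⟩ := hgh
      exact ⟨hg, hh⟩
    have hPc : (P.card : ℝ) ≤ Real.exp (∑ i ∈ Finset.range (L + 1), D.a i) := by
      calc (P.card : ℝ) ≤ ((∑ g ∈ T, (net g).card : ℕ) : ℝ) := by
            refine Nat.cast_le.2 (Finset.card_biUnion_le.trans ?_)
            exact Finset.sum_le_sum (fun g _ => Finset.card_image_le)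
        _ = ∑ g ∈ T, ((net g).card : ℝ) := by push_cast; rfl
        _ ≤ ∑ g ∈ T, Real.exp (D.a L) := Finset.sum_le_sum (fun g hg => hnc g (hTF g hg))
        _ = T.card * Real.exp (D.a L) := by simp
        _ ≤ Real.exp (∑ i ∈ Finset.range L, D.a i) * Real.exp (D.a L) := by gcongr
        _ = _ := by rw [← Real.exp_add, Finset.sum_range_succ]
    have hu2 : D.u L ^ 2 / 2 ≥ (∑ i ∈ Finset.range (L + 1), D.a i) + (L + 4) := by
      unfold ChainData.u
      rcases le_or_gt 0 (2 * (∑ i ∈ Finset.range (L + 1), D.a i) + 2 * ((L:ℝ) + 4)) with h | h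
      · rw [Real.sq_sqrt h]; linarith
      · rw [Real.sqrt_eq_zero_of_nonpos h.le]; simp; linarith
    have hbc : ∀ gh ∈ P, ((bad gh).card : ℝ) ≤ 2 ^ (Fintype.card ι) * (2 * Real.exp (-(D.u L ^ 2 / 2))) := by
      intro gh hgh
      obtain ⟨h1, h2⟩ := hPm gh hgh
      have hgF := hTF _ h1
      have hhF := hnF _ hgF _ h2
      have := sign_tail (fun i => ((D.φ gh.2 (x (i, true)) - D.φ gh.2 (x (i, false))) -
        (D.φ gh.1 (x (i, true)) - D.φ gh.1 (x (i, false))))) (D.u L) (4 * Real.sqrt (Fintype.card ι) * D.w L)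
        (Real.sqrt_nonneg _) (by have := D.hw L; positivity)
        (link_sq D x hx L gh.2 gh.1 hhF hgF (hnr _ hgF _ h2))
      simp only [hbad, sgnSum_sub]
      exact this
    refine ⟨P.image Prod.snd, Bad ∪ P.biUnion bad, ?_, ?_, ?_, ?_, ?_⟩
    · intro c hc
      obtain ⟨gh, hgh, rfl⟩ := Finset.mem_image.1 hc
      obtain ⟨h1, h2⟩ := hPm gh hgh
      exact hnF _ (hTF _ h1) _ h2
    · exact (Nat.cast_le.2 Finset.card_image_le).trans hPc
    · intro f hf
      obtain ⟨g, hg, hr⟩ := hTn f hf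
      obtain ⟨h, hh, hr'⟩ := hnn g (hTF g hg) f hf hr
      refine ⟨h, Finset.mem_image.2 ⟨(g, h), ?_, rfl⟩, hr'⟩
      simp only [hP, Finset.mem_biUnion, Finset.mem_image]
      exact ⟨g, hg, h, hh, rfl⟩
    · have hc : (0:ℝ) < 2 ^ (Fintype.card ι) := by positivity
      have h1 : ((P.biUnion bad).card : ℝ) ≤ 2 ^ (Fintype.card ι) * (2 * Real.exp (-((L:ℝ) + 4))) := by
        calc ((P.biUnion bad).card : ℝ) ≤ ((∑ g ∈ P, (bad g).card : ℕ) : ℝ) := Nat.cast_le.2 Finset.card_biUnion_le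
          _ = ∑ g ∈ P, ((bad g).card : ℝ) := by push_cast; rfl
          _ ≤ ∑ g ∈ P, 2 ^ (Fintype.card ι) * (2 * Real.exp (-(D.u L ^ 2 / 2))) := Finset.sum_le_sum hbc
          _ = P.card * (2 ^ (Fintype.card ι) * (2 * Real.exp (-(D.u L ^ 2 / 2)))) := by simp
          _ ≤ Real.exp (∑ i ∈ Finset.range (L + 1), D.a i) * (2 ^ (Fintype.card ι) * (2 * Real.exp (-(D.u L ^ 2 / 2)))) := by gcongr
          _ = 2 ^ (Fintype.card ι) * (2 * Real.exp (∑ i ∈ Finset.range (L + 1), D.a i + -(D.u L ^ 2 / 2))) := by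
              rw [Real.exp_add]; ring
          _ ≤ _ := by
              gcongr
              linarith
      have h2 : Real.exp (-((L:ℝ) + 4)) ≤ (1 / 2) ^ (L + 4) := by
        have e : -((L:ℝ) + 4) = ((L + 4 : ℕ) : ℝ) * (-1) := by push_cast; ring
        rw [e, Real.exp_nat_mul]
        gcongr
        rw [Real.exp_neg, one_div]
        exact inv_anti₀ (by norm_num) (by have := Real.add_one_le_exp 1; linarith)
      have h3 : ((Bad ∪ P.biUnion bad).card : ℝ) ≤ Bad.card + (P.biUnion bad).card := by
        exact_mod_cast Finset.card_union_le _ _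
      have h4 : ((1:ℝ) / 2) ^ (L + 4) = (1 / 16) * (1 / 2) ^ L := by rw [pow_add]; norm_num; ring
      have h5 : ((1:ℝ) / 2) ^ (L + 1) = (1 / 2) * (1 / 2) ^ L := by rw [pow_add]; norm_num; ring
      rw [h5]
      rw [h4] at h2
      have h6 := mul_le_mul_of_nonneg_left h2 hc.le
      nlinarith [h1, hBc, h3, h6]
    · intro σ hσ c hc
      rw [Finset.mem_union, not_or] at hσ
      obtain ⟨gh, hgh, rfl⟩ := Finset.mem_image.1 hc
      obtain ⟨h1, h2⟩ := hPm gh hgh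
      have hb1 := hB σ hσ.1 gh.1 h1
      have hb2 : σ ∉ bad gh := fun h => hσ.2 (Finset.mem_biUnion.2 ⟨gh, hgh, h⟩)
      simp only [hbad, Finset.mem_filter, Finset.mem_univ, true_and, not_lt] at hb2
      rw [Finset.sum_range_succ, mul_add]
      have := abs_sub_abs_le_abs_sub (sgnSum D x σ gh.2) (sgnSum D x σ gh.1)
      nlinarith

open Classical in
lemma halving_step {V E ι : Type*} [Fintype ι] [DecidableEq ι] (D : ChainData V E) (x : ι × Bool → V)
    (hx : ∀ c ∈ D.F, ∑ z, D.φ c (x z) ≤ 4 * (Fintype.card ι : ℝ)) (L : ℕ) :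
    ∃ (Bad : Finset (ι → Bool)),
      (Bad.card : ℝ) ≤ 2 ^ (Fintype.card ι) * (1 / 4) ∧
      ∀ σ, σ ∉ Bad → ∀ c ∈ D.F, |sgnSum D x σ c| ≤
        4 * Real.sqrt (Fintype.card ι) * D.bd L (Fintype.card ι) := by
  obtain ⟨T, Bad, hTF, hTc, hTn, hBc, hB⟩ := halving_aux D x hx L
  refine ⟨Bad, hBc.trans ?_, ?_⟩
  · have : (0:ℝ) < (1 / 2) ^ L := by positivity
    gcongr
    linarith
  · intro σ hσ f hf
    obtain ⟨h, hh, hr⟩ := hTn f hf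
    have h1 := hB σ hσ h hh
    have h2 := link_sq D x hx L f h hf (hTF h hh) hr
    have h3 : |sgnSum D x σ f - sgnSum D x σ h| ≤ Real.sqrt (Fintype.card ι) * (4 * Real.sqrt (Fintype.card ι) * D.w L) := by
      rw [sgnSum_sub]
      apply abs_le_of_sq_le_sq
      · refine (Finset.sum_mul_sq_le_sq_mul_sq _ _ _).trans ?_
        rw [mul_pow, Real.sq_sqrt (by positivity)]
        have e : ∑ i : ι, sgnB (σ i) ^ 2 = Fintype.card ι := by
          have : ∀ i : ι, sgnB (σ i) ^ 2 = 1 := by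
            intro i; unfold sgnB; split <;> norm_num
          simp [this]
        rw [e]
        exact mul_le_mul_of_nonneg_left h2 (by positivity)
      · have := D.hw L
        positivity
    have := abs_sub_abs_le_abs_sub (sgnSum D x σ f) (sgnSum D x σ h)
    unfold ChainData.bd
    nlinarith

end

noncomputable section

/-- average of `φ` over sample -/
def avgP {V : Type*} {n : ℕ} (x : Fin n → V) (φ : V → ℝ) : ℝ := (∑ i, φ (x i)) / n

lemma halve_aux {V E : Type*} (D : ChainData V E) {j : ℕ} {x : Fin (2 ^ (j + 1)) → V} 
   {e : (Fin (2 ^ j) × Bool) ≃ Fin (2 ^ (j + 1))} {σ : Fin (2 ^ j) → Bool} {L : ℕ} {β : ℝ} (c : E)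
   (h : |sgnSum D (x ∘ e) σ c| ≤ 4 * Real.sqrt ((2 ^ j : ℕ) : ℝ) * D.bd L (2 ^ j))
   (hβ : D.bd L (2 ^ j) ≤ β) : 
   |avgP (fun i => (x ∘ e) (i, σ i)) (D.φ c) - avgP x (D.φ c)| ≤ 2 * β / Real.sqrt (2 ^ j) := by
  have hs : avgP (fun i => (x ∘ e) (i, σ i)) (D.φ c) - avgP x (D.φ c) = sgnSum D (x ∘ e) σ c / (2 * 2 ^ j) := by
    unfold avgP
    rw [← Equiv.sum_comp e (fun z => D.φ c (x z)), Fintype.sum_prod_type]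
    push_cast
    have ep : (2:ℝ) ^ (j + 1) = 2 ^ j * 2 := pow_succ _ _
    rw [ep, eq_div_iff (by positivity), sub_mul]
    have e1 : ∀ s : ℝ, s / (2 ^ j) * (2 * 2 ^ j) = 2 * s := by intro s; field_simp
    have e2 : ∀ s : ℝ, s / (2 ^ j * 2) * (2 * 2 ^ j) = s := by intro s; field_simp
    rw [e1, e2, sgnSum, Finset.mul_sum, ← Finset.sum_sub_distrib]
    refine Finset.sum_congr rfl (fun i _ => ?_)
    simp only [Fintype.sum_bool, Function.comp]
    cases σ i <;> simp [sgnB] <;> ring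
  rw [hs, abs_div, abs_of_pos (by positivity : (0:ℝ) < 2 * 2 ^ j), div_le_iff₀ (by positivity)]
  push_cast at h
  refine h.trans ?_
  have hp : 0 < Real.sqrt (2 ^ j) := Real.sqrt_pos.2 (by positivity)
  have hq : Real.sqrt (2 ^ j) * Real.sqrt (2 ^ j) = (2:ℝ) ^ j := Real.mul_self_sqrt (by positivity)
  have : 2 * β / Real.sqrt (2 ^ j) * (2 * 2 ^ j) = 4 * Real.sqrt (2 ^ j) * β := by
    have hq2 : (2:ℝ) ^ j / Real.sqrt (2 ^ j) = Real.sqrt (2 ^ j) := by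
      rw [div_eq_iff hp.ne', hq]
    calc _ = 4 * ((2:ℝ) ^ j / Real.sqrt (2 ^ j)) * β := by ring
      _ = _ := by rw [hq2]
  rw [this]
  gcongr

lemma halve_two {V E E' : Type*} (D : ChainData V E) (D' : ChainData V E') (j : ℕ)
    (x : Fin (2 ^ (j + 1)) → V) (hx : ∀ c ∈ D.F, avgP x (D.φ c) ≤ 2)
    (hx' : ∀ c ∈ D'.F, avgP x (D'.φ c) ≤ 2) (β : ℝ) (L L' : ℕ)
    (hβ : D.bd L (2 ^ j) ≤ β) (hβ' : D'.bd L' (2 ^ j) ≤ β) :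
    ∃ y : Fin (2 ^ j) → V,
      (∀ c ∈ D.F, |avgP y (D.φ c) - avgP x (D.φ c)| ≤ 2 * β / Real.sqrt (2 ^ j)) ∧
      (∀ c ∈ D'.F, |avgP y (D'.φ c) - avgP x (D'.φ c)| ≤ 2 * β / Real.sqrt (2 ^ j)) := by
  classical
  have hcard : Fintype.card (Fin (2 ^ j) × Bool) = Fintype.card (Fin (2 ^ (j + 1))) := by
    simp [pow_succ]
  let e := Fintype.equivOfCardEq hcard
  have hsum : ∀ φ : V → ℝ, ∑ z, φ ((x ∘ e) z) = 2 * 2 ^ j * avgP x φ := by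
    intro φ
    unfold avgP
    have hh := Equiv.sum_comp e (fun z => φ (x z))
    simp only [Function.comp]
    rw [hh]
    push_cast
    have ep : (2:ℝ) ^ (j + 1) = 2 ^ j * 2 := pow_succ _ _
    rw [ep]
    field_simp
  have h1 : ∀ c ∈ D.F, ∑ z, D.φ c ((x ∘ e) z) ≤ 4 * (Fintype.card (Fin (2 ^ j)) : ℝ) := by
    intro c hc
    rw [hsum, Fintype.card_fin]
    push_cast
    have := hx c hc
    have h2 : (0:ℝ) < 2 ^ j := by positivity
    nlinarith
  have h1' : ∀ c ∈ D'.F, ∑ z, D'.φ c ((x ∘ e) z) ≤ 4 * (Fintype.card (Fin (2 ^ j)) : ℝ) := by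
    intro c hc
    rw [hsum, Fintype.card_fin]
    push_cast
    have := hx' c hc
    have h2 : (0:ℝ) < 2 ^ j := by positivity
    nlinarith
  obtain ⟨Bad, hBc, hB⟩ := halving_step D (x ∘ e) h1 L
  obtain ⟨Bad', hBc', hB'⟩ := halving_step D' (x ∘ e) h1' L'
  have hex : ∃ σ : Fin (2 ^ j) → Bool, σ ∉ Bad ∪ Bad' := by
    by_contra hcon
    push Not at hcon
    have hu : Bad ∪ Bad' = Finset.univ := Finset.eq_univ_of_forall hcon
    have hc1 : ((Bad ∪ Bad').card : ℝ) ≤ Bad.card + Bad'.card := by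
      exact_mod_cast Finset.card_union_le _ _
    rw [hu, Finset.card_univ] at hc1
    simp only [Fintype.card_fin, Fintype.card_pi, Fintype.card_bool, Finset.prod_const, Finset.card_univ] at hc1 hBc hBc'
    push_cast at hc1
    have : (0:ℝ) < 2 ^ (2 ^ j) := by positivity
    linarith
  obtain ⟨σ, hσ⟩ := hex
  rw [Finset.mem_union, not_or] at hσ
  simp only [Fintype.card_fin] at hB hB'
  refine ⟨fun i => (x ∘ e) (i, σ i), ?_, ?_⟩
  all_goals
    intro c hc
  · exact halve_aux D c (hB σ hσ.1 c hc) hβ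
  · exact halve_aux D' c (hB' σ hσ.2 c hc) hβ'

lemma halve_iter {V E E' : Type*} (D : ChainData V E) (D' : ChainData V E') (J0 : ℕ)
    (x : Fin (2 ^ J0) → V) (t : E → ℝ) (t' : E' → ℝ) (δ β : ℝ) (hβ0 : 0 ≤ β)
    (ht : ∀ c ∈ D.F, t c ≤ 1) (ht' : ∀ c ∈ D'.F, t' c ≤ 1)
    (hx : ∀ c ∈ D.F, |avgP x (D.φ c) - t c| ≤ δ)
    (hx' : ∀ c ∈ D'.F, |avgP x (D'.φ c) - t' c| ≤ δ)
    (hβ : ∀ j < J0, ∃ L, D.bd L (2 ^ j) ≤ β) (hβ' : ∀ j < J0, ∃ L, D'.bd L (2 ^ j) ≤ β)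
    (J : ℕ) (hJ : J ≤ J0) (hδ : δ + 7 * β / Real.sqrt (2 ^ J) ≤ 1) :
    ∃ y : Fin (2 ^ J) → V,
      (∀ c ∈ D.F, |avgP y (D.φ c) - t c| ≤ δ + 7 * β / Real.sqrt (2 ^ J)) ∧
      (∀ c ∈ D'.F, |avgP y (D'.φ c) - t' c| ≤ δ + 7 * β / Real.sqrt (2 ^ J)) := by
  induction hJ using Nat.decreasingInduction with
  | self =>
    have : 0 ≤ 7 * β / Real.sqrt (2 ^ J0) := by positivity
    exact ⟨x, fun c hc => (hx c hc).trans (by linarith), fun c hc => (hx' c hc).trans (by linarith)⟩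
  | of_succ j hj ih =>
    have hp : 0 < Real.sqrt (2 ^ j) := Real.sqrt_pos.2 (by positivity)
    have hs : 7 * β / Real.sqrt (2 ^ (j + 1)) + 2 * β / Real.sqrt (2 ^ j) ≤ 7 * β / Real.sqrt (2 ^ j) := by
      rw [pow_succ, Real.sqrt_mul (by positivity)]
      have h2 : (1.4:ℝ) ≤ Real.sqrt 2 := Real.le_sqrt_of_sq_le (by norm_num)
      have : 7 * β / (Real.sqrt (2 ^ j) * Real.sqrt 2) ≤ 5 * β / Real.sqrt (2 ^ j) := by
        rw [div_le_div_iff₀ (by positivity) hp]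
        have : 0 ≤ β * Real.sqrt (2 ^ j) := by positivity
        nlinarith
      have e : 7 * β / Real.sqrt (2 ^ j) = 5 * β / Real.sqrt (2 ^ j) + 2 * β / Real.sqrt (2 ^ j) := by ring
      linarith
    have hnn : 0 ≤ 2 * β / Real.sqrt (2 ^ j) := by positivity
    obtain ⟨y, hy, hy'⟩ := ih (by linarith)
    obtain ⟨L, hL⟩ := hβ j hj
    obtain ⟨L', hL'⟩ := hβ' j hj
    obtain ⟨z, hz, hz'⟩ := halve_two D D' j y
      (fun c hc => by have h1 := (abs_le.1 (hy c hc)).2; have h2 := ht c hc; linarith)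
      (fun c hc => by have h1 := (abs_le.1 (hy' c hc)).2; have h2 := ht' c hc; linarith) β L L' hL hL'
    refine ⟨z, fun c hc => ?_, fun c hc => ?_⟩
    · have h1 := hy c hc
      have h2 := hz c hc
      have h3 := abs_sub_le (avgP z (D.φ c)) (avgP y (D.φ c)) (t c)
      linarith
    · have h1 := hy' c hc
      have h2 := hz' c hc
      have h3 := abs_sub_le (avgP z (D'.φ c)) (avgP y (D'.φ c)) (t' c)
      linarith
end

noncomputable section

lemma sep_net {E : Type*} (G : Set E) (R : E → E → Prop) (hrefl : ∀ x, R x x)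
    (hsymm : ∀ x y, R x y → R y x) (A : ℝ)
    (hA : ∀ T : Finset E, (∀ h ∈ T, h ∈ G) → (∀ x ∈ T, ∀ y ∈ T, x ≠ y → ¬ R x y) → (T.card : ℝ) ≤ A) :
    ∃ T : Finset E, (∀ h ∈ T, h ∈ G) ∧ (T.card : ℝ) ≤ A ∧ ∀ f ∈ G, ∃ h ∈ T, R f h := by
  classical
  by_contra hcon
  push Not at hcon
  have key : ∀ n : ℕ, ∃ T : Finset E, (∀ h ∈ T, h ∈ G) ∧
      (∀ x ∈ T, ∀ y ∈ T, x ≠ y → ¬ R x y) ∧ T.card = n := by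
    intro n
    induction n with
    | zero => exact ⟨∅, by simp, by simp, by simp⟩
    | succ n ih =>
      obtain ⟨T, h1, h2, h3⟩ := ih
      obtain ⟨f, hf, hf'⟩ := hcon T h1 (hA T h1 h2)
      have hfT : f ∉ T := fun h => hf' f h (hrefl f)
      refine ⟨insert f T, ?_, ?_, ?_⟩
      · intro h hh
        rcases Finset.mem_insert.1 hh with rfl | hh
        · exact hf
        · exact h1 h hh
      · intro x hx y hy hxy
        rcases Finset.mem_insert.1 hx with hxe | hxm
        · rcases Finset.mem_insert.1 hy with hye | hym
          · exact absurd (hxe.trans hye.symm) hxy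
          · rw [hxe]; exact hf' y hym
        · rcases Finset.mem_insert.1 hy with hye | hym
          · rw [hye]; exact fun h => hf' x hxm (hsymm _ _ h)
          · exact h2 x hxm y hym hxy
      · rw [Finset.card_insert_of_notMem hfT, h3]
  obtain ⟨T, h1, h2, h3⟩ := key (⌊A⌋₊ + 1)
  have h4 := hA T h1 h2
  rw [h3] at h4
  have h5 := Nat.lt_floor_add_one A
  push_cast at h4
  linarith

lemma euclid_cov {E : Type*} [NormedAddCommGroup E] [NormedSpace ℝ E] [FiniteDimensional ℝ E]
    (F : Set E) (g : E) (s : ℝ) (hs : 0 < s) :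
    ∃ T : Finset E, (∀ h ∈ T, h ∈ F) ∧ (T.card : ℝ) ≤ Real.exp (2 * Module.finrank ℝ E) ∧
    (∀ h ∈ T, ‖h - g‖ ≤ s) ∧ ∀ f ∈ F, ‖f - g‖ ≤ s → ∃ h ∈ T, ‖f - h‖ ≤ s / 2 := by
  classical
  obtain ⟨T, h1, h2, h3⟩ := sep_net {f | f ∈ F ∧ ‖f - g‖ ≤ s} (fun f h => ‖f - h‖ ≤ s / 2)
    (fun x => by simp; positivity) (fun x y h => by rwa [norm_sub_rev])
    (Real.exp (2 * Module.finrank ℝ E)) (by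
      intro T hT hsep
      have hinj : Function.Injective (fun f : E => (2 / s) • (f - g)) := by
        intro a b hab
        have := smul_right_injective E (by positivity : (2 / s) ≠ 0) hab
        simpa using this
      have := Besicovitch.card_le_of_separated (T.image (fun f => (2 / s) • (f - g)))
        (by
          intro c hc
          obtain ⟨f, hf, rfl⟩ := Finset.mem_image.1 hc
          rw [norm_smul, Real.norm_of_nonneg (by positivity)]
          have := (hT f hf).2
          rw [div_mul_eq_mul_div, div_le_iff₀ hs]
          linarith)
        (by
          intro c hc d hd hcd
          obtain ⟨f, hf, rfl⟩ := Finset.mem_image.1 hc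
          obtain ⟨f', hf', rfl⟩ := Finset.mem_image.1 hd
          have hne : f ≠ f' := fun h => hcd (by rw [h])
          have := hsep f hf f' hf' hne
          push Not at this
          rw [← smul_sub, sub_sub_sub_cancel_right, norm_smul, Real.norm_of_nonneg (by positivity),
            div_mul_eq_mul_div, le_div_iff₀ hs]
          linarith)
      rw [Finset.card_image_of_injective _ hinj] at this
      have h5 : (5:ℝ) ≤ Real.exp 2 := by
        have : Real.exp 2 = Real.exp 1 * Real.exp 1 := by rw [← Real.exp_add]; norm_num
        have h1 := Real.exp_one_gt_d9
        nlinarith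
      calc (T.card : ℝ) ≤ ((5 ^ Module.finrank ℝ E : ℕ) : ℝ) := by exact_mod_cast this
        _ = 5 ^ Module.finrank ℝ E := by push_cast; rfl
        _ ≤ Real.exp 2 ^ Module.finrank ℝ E := by gcongr
        _ = _ := by rw [← Real.exp_nat_mul, mul_comm])
  exact ⟨T, fun h hh => (h1 h hh).1, h2, fun h hh => (h1 h hh).2, fun f hf hfg => h3 f ⟨hf, hfg⟩⟩

section Gauss
variable {E : Type*} [NormedAddCommGroup E] [InnerProductSpace ℝ E] [FiniteDimensional ℝ E]
  [MeasurableSpace E] [BorelSpace E]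

/-- Gaussian weight -/
def gw (x : E) : ℝ := Real.exp (-(‖x‖ ^ 2 / 2))

lemma gw_pos (x : E) : 0 < gw x := Real.exp_pos _

lemma gw_int : Integrable (gw : E → ℝ) := by
  have := GaussianFourier.integrable_cexp_neg_mul_sq_norm_add (V := E) (b := 1/2) (by norm_num) 0 0
  refine this.norm.congr (Filter.Eventually.of_forall fun x => ?_)
  simp only [gw, Complex.norm_exp]
  congr 1
  have : (-(1 / 2 : ℂ) * (‖x‖ : ℂ) ^ 2 + 0 * ((inner ℝ (0:E) x : ℝ) : ℂ)) = ((-(‖x‖ ^ 2 / 2) : ℝ) : ℂ) := by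
    push_cast; ring
  rw [this, Complex.ofReal_re]

lemma gw_Z : 0 < ∫ x : E, gw x := by
  rw [integral_pos_iff_support_of_nonneg (fun x => (gw_pos x).le) gw_int]
  have : Function.support (gw : E → ℝ) = Set.univ := by
    ext x; simp [(gw_pos x).ne']
  rw [this]
  exact Measure.measure_univ_pos.2 (NeZero.ne _)

lemma gw_shift (x b : E) : Real.exp (inner ℝ x b) * gw x = Real.exp (‖b‖ ^ 2 / 2) * gw (x - b) := by
  unfold gw
  rw [← Real.exp_add, ← Real.exp_add, norm_sub_sq_real]
  congr 1; ring

lemma gw_mgf_int (b : E) : Integrable (fun x : E => Real.exp (inner ℝ x b) * gw x) := by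
  simp_rw [gw_shift]
  exact (gw_int.comp_sub_right b).const_mul _

lemma gw_mgf (b : E) : ∫ x : E, Real.exp (inner ℝ x b) * gw x = Real.exp (‖b‖ ^ 2 / 2) * ∫ x : E, gw x := by
  simp_rw [gw_shift]
  rw [integral_const_mul, integral_sub_right_eq_self]

/-- dual Sudakov (volumetric form) -/
lemma dual_sudakov {n : ℕ} (hn : 0 < n) (v : Fin n → E) (K : ℝ) (hK : 0 < K) (hv : ∀ j, ‖v j‖ ^ 2 ≤ K)
    (T : Finset E) (ρ2 s : ℝ) (hs : 0 < s) (hT : ∀ h ∈ T, ‖h‖ ^ 2 ≤ ρ2)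
    (hsep : ∀ x ∈ T, ∀ y ∈ T, x ≠ y → ∃ j, s / 2 < |inner ℝ (x - y) (v j)|) :
    (T.card : ℝ) ≤ 2 * Real.exp (16 * K * ρ2 * Real.log (4 * n) / s ^ 2) := by
  classical
  have hn1 : (1:ℝ) ≤ n := by exact_mod_cast hn
  have hlog : 0 < Real.log (4 * n) := Real.log_pos (by linarith)
  set τ := Real.sqrt (2 * K * Real.log (4 * n)) with hτ
  have hτ0 : 0 < τ := Real.sqrt_pos.2 (by positivity)
  have hτ2 : τ ^ 2 = 2 * K * Real.log (4 * n) := Real.sq_sqrt (by positivity)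
  set Vs : Set E := {x | ∀ j, |inner ℝ x (v j)| ≤ τ} with hVs
  have hVm : MeasurableSet Vs := by
    have : Vs = ⋂ j, {x : E | |inner ℝ x (v j)| ≤ τ} := by ext x; simp [hVs]
    rw [this]
    refine MeasurableSet.iInter fun j => ?_
    exact (isClosed_le (by fun_prop) continuous_const).measurableSet
  set χ : E → ℝ := Vs.indicator (fun _ => 1) with hχ
  have hχ0 : ∀ x, 0 ≤ χ x := fun x => Set.indicator_nonneg (fun _ _ => zero_le_one) x
  have hχ1 : ∀ x, χ x ≤ 1 := by
    intro x
    by_cases h : x ∈ Vs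
    · exact (Set.indicator_of_mem h _).le
    · exact (Set.indicator_of_notMem h _).le.trans zero_le_one
  have hχneg : ∀ x, χ (-x) = χ x := by
    intro x
    have : -x ∈ Vs ↔ x ∈ Vs := by simp [hVs]
    by_cases h : x ∈ Vs
    · simp only [hχ]; rw [Set.indicator_of_mem h, Set.indicator_of_mem (this.2 h)]
    · simp only [hχ]; rw [Set.indicator_of_notMem h, Set.indicator_of_notMem (fun h' => h (this.1 h'))]
  have hχm : Measurable χ := measurable_const.indicator hVm
  have hbdd : ∀ (f : E → ℝ), Integrable f → ∀ z : E, Integrable (fun x => χ (x - z) * f x) := by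
    intro f hf z
    refine hf.bdd_mul (c := 1) (hχm.comp (measurable_id.sub_const z)).aestronglyMeasurable ?_
    refine Filter.Eventually.of_forall fun x => ?_
    rw [Real.norm_of_nonneg (hχ0 _)]
    exact hχ1 _
  have hbdd0 : ∀ (f : E → ℝ), Integrable f → Integrable (fun x => χ x * f x) := by
    intro f hf
    simpa using hbdd f hf 0
  set Z := ∫ x : E, gw x with hZ
  have hZ0 : 0 < Z := gw_Z
  -- mass of V
  have hmass : Z / 2 ≤ ∫ x, χ x * gw x := by
    set l := τ / K with hl
    have hpt : ∀ x : E, gw x - χ x * gw x ≤ ∑ j, Real.exp (-(l * τ)) * (Real.exp (inner ℝ x (l • v j)) * gw x + Real.exp (inner ℝ x ((-l) • v j)) * gw x) := by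
      intro x
      have hw := gw_pos x
      by_cases h : x ∈ Vs
      · have : χ x = 1 := Set.indicator_of_mem h _
        rw [this]; simp only [one_mul, sub_self]
        positivity
      · have : χ x = 0 := Set.indicator_of_notMem h _
        rw [this]
        have h' : ∃ j, τ < |inner ℝ x (v j)| := by
          simpa [hVs] using h
        obtain ⟨j, hj⟩ := h'
        refine le_trans ?_ (Finset.single_le_sum (f := fun j => Real.exp (-(l * τ)) * (Real.exp (inner ℝ x (l • v j)) * gw x + Real.exp (inner ℝ x ((-l) • v j)) * gw x)) (fun i _ => by positivity) (Finset.mem_univ j))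
        simp only [inner_smul_right, zero_mul, sub_zero]
        have hl0 : 0 < l := by positivity
        have e1 : 1 ≤ Real.exp (-(l * τ)) * (Real.exp (l * inner ℝ x (v j)) + Real.exp (-l * inner ℝ x (v j))) := by
          rw [mul_add, ← Real.exp_add, ← Real.exp_add]
          rcases lt_abs.1 hj with h | h
          · have : 1 ≤ Real.exp (-(l * τ) + l * inner ℝ x (v j)) := Real.one_le_exp (by nlinarith)
            have := Real.exp_pos (-(l * τ) + -l * inner ℝ x (v j))
            linarith
          · have : 1 ≤ Real.exp (-(l * τ) + -l * inner ℝ x (v j)) := Real.one_le_exp (by nlinarith)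
            have := Real.exp_pos (-(l * τ) + l * inner ℝ x (v j))
            linarith
        calc gw x = 1 * gw x := by ring
          _ ≤ _ := mul_le_mul_of_nonneg_right e1 hw.le
          _ = _ := by ring
    have hIsq : ∀ j ∈ (Finset.univ : Finset (Fin n)), Integrable (fun x : E => Real.exp (-(l * τ)) * (Real.exp (inner ℝ x (l • v j)) * gw x + Real.exp (inner ℝ x ((-l) • v j)) * gw x)) :=
      fun j _ => ((gw_mgf_int _).add (gw_mgf_int _)).const_mul _
    have h1 := integral_mono (gw_int.sub (hbdd0 gw gw_int)) (integrable_finsetSum _ hIsq) hpt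
    simp only [Pi.sub_apply] at h1
    rw [integral_sub gw_int (hbdd0 gw gw_int), integral_finsetSum _ hIsq] at h1
    have h2 : ∀ j, ∫ x : E, Real.exp (-(l * τ)) * (Real.exp (inner ℝ x (l • v j)) * gw x + Real.exp (inner ℝ x ((-l) • v j)) * gw x) ≤ 2 * (4 * n : ℝ)⁻¹ * Z := by
      intro j
      rw [integral_const_mul, integral_add (gw_mgf_int _) (gw_mgf_int _), gw_mgf, gw_mgf, norm_smul, norm_smul, norm_neg]
      have e1 : (‖l‖ * ‖v j‖) ^ 2 / 2 ≤ l * τ / 2 := by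
        rw [mul_pow, Real.norm_eq_abs, sq_abs]
        have : l ^ 2 * ‖v j‖ ^ 2 ≤ l ^ 2 * K := mul_le_mul_of_nonneg_left (hv j) (sq_nonneg _)
        have e : l ^ 2 * K = l * τ := by rw [hl]; field_simp
        linarith
      have e2 : Real.exp (-(l * τ)) * Real.exp ((‖l‖ * ‖v j‖) ^ 2 / 2) ≤ (4 * n : ℝ)⁻¹ := by
        rw [← Real.exp_add]
        have e3 : l * τ / 2 = Real.log (4 * n) := by
          have : l * τ = τ ^ 2 / K := by rw [hl]; ring
          rw [this, hτ2]; field_simp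
        calc _ ≤ Real.exp (-Real.log (4 * n)) := Real.exp_le_exp.2 (by linarith)
          _ = _ := by rw [Real.exp_neg, Real.exp_log (by positivity)]
      have := mul_le_mul_of_nonneg_right e2 hZ0.le
      linarith
    have h3 : ∑ j : Fin n, ∫ x : E, Real.exp (-(l * τ)) * (Real.exp (inner ℝ x (l • v j)) * gw x + Real.exp (inner ℝ x ((-l) • v j)) * gw x) ≤ Z / 2 := by
      calc _ ≤ ∑ j : Fin n, 2 * (4 * n : ℝ)⁻¹ * Z := Finset.sum_le_sum (fun j _ => h2 j)
        _ = Z / 2 := by simp; field_simp; norm_num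
    linarith
  -- shift lower bound
  have hshift : ∀ z : E, Real.exp (-(‖z‖ ^ 2 / 2)) * (Z / 2) ≤ ∫ x, χ (x - z) * gw x := by
    intro z
    have e1 : ∫ x, χ (x - z) * gw x = ∫ x, χ x * gw (x + z) := by
      rw [← integral_add_right_eq_self (fun x => χ (x - z) * gw x) z]
      simp
    have e2 : ∫ x, χ x * gw (x + z) = ∫ x, χ x * gw (x - z) := by
      rw [← integral_neg_eq_self (fun x => χ x * gw (x + z))]
      refine integral_congr_ae (Filter.Eventually.of_forall fun x => ?_)
      simp only [hχneg, gw]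
      rw [show -x + z = -(x - z) by abel, norm_neg]
    have i1 := hbdd0 _ (gw_int.comp_add_right z)
    have i2 := hbdd0 _ (gw_int.comp_sub_right z)
    have e3 : ∫ x, Real.exp (-(‖z‖ ^ 2 / 2)) * (2 * (χ x * gw x)) ≤ ∫ x, (χ x * gw (x + z) + χ x * gw (x - z)) := by
      refine integral_mono (((hbdd0 gw gw_int).const_mul 2).const_mul _) (i1.add i2) ?_
      intro x
      have a1 : gw (x + z) = Real.exp (-(‖z‖ ^ 2 / 2)) * gw x * Real.exp (-inner ℝ x z) := by
        unfold gw
        rw [← Real.exp_add, ← Real.exp_add, norm_add_sq_real]; congr 1; ring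
      have a2 : gw (x - z) = Real.exp (-(‖z‖ ^ 2 / 2)) * gw x * Real.exp (inner ℝ x z) := by
        unfold gw
        rw [← Real.exp_add, ← Real.exp_add, norm_sub_sq_real]; congr 1; ring
      have a3 : 2 ≤ Real.exp (-inner ℝ x z) + Real.exp (inner ℝ x z) := by
        have := Real.add_one_le_exp (-inner ℝ x z)
        have := Real.add_one_le_exp (inner ℝ x z)
        linarith
      have a4 : 0 ≤ Real.exp (-(‖z‖ ^ 2 / 2)) * (χ x * gw x) := by
        have := hχ0 x; have := gw_pos x; positivity
      simp only [a1, a2]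
      have := mul_le_mul_of_nonneg_left a3 a4
      linarith
    rw [integral_const_mul, integral_const_mul, integral_add i1 i2, ← e2] at e3
    rw [e1]
    have := mul_le_mul_of_nonneg_left hmass (Real.exp_pos (-(‖z‖ ^ 2 / 2))).le
    linarith
  set c := 4 * τ / s with hc
  have hc0 : 0 < c := by positivity
  have hdisj : ∀ x : E, ∑ h ∈ T, χ (x - c • h) ≤ 1 := by
    intro x
    by_cases hx : ∃ h ∈ T, x - c • h ∈ Vs
    · obtain ⟨h, hh, hhV⟩ := hx
      rw [Finset.sum_eq_single_of_mem h hh]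
      · exact hχ1 _
      · intro h' hh' hne
        refine Set.indicator_of_notMem ?_ _
        intro hV'
        obtain ⟨j, hj⟩ := hsep h hh h' hh' hne.symm
        have b1 := hhV j
        have b2 := hV' j
        have b3 : c * inner ℝ (h - h') (v j) = inner ℝ (x - c • h') (v j) - inner ℝ (x - c • h) (v j) := by
          simp only [inner_sub_left, inner_smul_left]; simp; ring
        have b4 : |c * inner ℝ (h - h') (v j)| ≤ 2 * τ := by
          rw [b3]; exact (abs_sub _ _).trans (by linarith)
        rw [abs_mul, abs_of_pos hc0] at b4
        have b5 : c * (s / 2) = 2 * τ := by rw [hc]; field_simp; norm_num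
        have := mul_lt_mul_of_pos_left hj hc0
        linarith
    · push Not at hx
      rw [Finset.sum_eq_zero]
      · exact zero_le_one
      · intro h hh
        exact Set.indicator_of_notMem (hx h hh) _
  have hsum : ∑ h ∈ T, ∫ x, χ (x - c • h) * gw x ≤ Z := by
    rw [← integral_finsetSum _ (fun h _ => hbdd gw gw_int (c • h))]
    refine integral_mono (integrable_finsetSum _ (fun h _ => hbdd gw gw_int (c • h))) gw_int ?_
    intro x
    simp only []
    rw [← Finset.sum_mul]
    have := mul_le_mul_of_nonneg_right (hdisj x) (gw_pos x).le
    linarith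
  have hlow : ∑ h ∈ T, Real.exp (-(c ^ 2 * ρ2 / 2)) * (Z / 2) ≤ Z := by
    refine le_trans (Finset.sum_le_sum fun h hh => ?_) hsum
    refine le_trans ?_ (hshift (c • h))
    gcongr
    rw [norm_smul, mul_pow, Real.norm_eq_abs, sq_abs]
    exact mul_le_mul_of_nonneg_left (hT h hh) (sq_nonneg _)
  rw [Finset.sum_const, nsmul_eq_mul, Real.exp_neg] at hlow
  have hexp : c ^ 2 * ρ2 / 2 = 16 * K * ρ2 * Real.log (4 * n) / s ^ 2 := by
    rw [hc, div_pow, mul_pow, hτ2]; field_simp; ring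
  rw [hexp] at hlow
  have hpe := Real.exp_pos (16 * K * ρ2 * Real.log (4 * n) / s ^ 2)
  set X := Real.exp (16 * K * ρ2 * Real.log (4 * n) / s ^ 2)
  have h9 : (T.card : ℝ) * (X⁻¹ * (Z / 2)) = (T.card / (2 * X)) * Z := by field_simp
  rw [h9] at hlow
  have h10 : (T.card : ℝ) / (2 * X) ≤ 1 := by
    by_contra hcon
    push Not at hcon
    nlinarith
  rwa [div_le_one (by positivity)] at h10

end Gauss
end

noncomputable section

/-- normalized hypotheses on Φ -/
structure GoodPhi (Φ : ℝ → ℝ) (p q : ℝ) : Prop where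
  hp1 : 1 ≤ p
  hp2 : p ≤ 2
  hq : 1 ≤ q
  zero : Φ 0 = 0
  pos : ∀ t, 0 < t → 0 < Φ t
  inc : ∀ s t, 0 < s → s ≤ t → Φ s ≤ (s / t) ^ p * Φ t
  dec : ∀ s t, 0 < s → s ≤ t → (s / t) ^ q * Φ t ≤ Φ s

namespace GoodPhi
variable {Φ : ℝ → ℝ} {p q : ℝ}

lemma nonneg (h : GoodPhi Φ p q) {t : ℝ} (ht : 0 ≤ t) : 0 ≤ Φ t := by
  rcases ht.eq_or_lt with rfl | ht
  · rw [h.zero]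
  · exact (h.pos t ht).le

lemma mono (h : GoodPhi Φ p q) {s t : ℝ} (hs : 0 ≤ s) (hst : s ≤ t) : Φ s ≤ Φ t := by
  rcases hs.eq_or_lt with rfl | hs
  · rw [h.zero]; exact h.nonneg hst
  · have ht : 0 < t := hs.trans_le hst
    refine (h.inc s t hs hst).trans ?_
    have : (s / t) ^ p ≤ 1 := Real.rpow_le_one (by positivity) ((div_le_one ht).2 hst) (by linarith [h.hp1])
    have := mul_le_mul_of_nonneg_right this (h.pos t ht).le
    linarith

lemma diff (h : GoodPhi Φ p q) {s t : ℝ} (hs : 0 ≤ s) (hst : s ≤ t) (ht : 0 < t) :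
    Φ t - Φ s ≤ q * Φ t * ((t - s) / t) := by
  have hP := h.pos t ht
  rcases hs.eq_or_lt with rfl | hs
  · rw [h.zero, sub_zero, sub_zero, div_self ht.ne']
    nlinarith [h.hq]
  · have h1 := h.dec s t hs hst
    have h2 : 1 + q * (s / t - 1) ≤ (s / t) ^ q := by
      have := one_add_mul_self_le_rpow_one_add (s := s / t - 1) (by have : 0 < s / t := by positivity
                                                                    linarith) h.hq
      simpa using this
    have h3 := mul_le_mul_of_nonneg_right h2 hP.le
    have e : (t - s) / t = 1 - s / t := by field_simp
    rw [e]
    linarith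

lemma lip_sq_aux (h : GoodPhi Φ p q) {s t M : ℝ} (hs : 0 ≤ s) (hst : s ≤ t) (htM : t ≤ M) :
    (Φ t - Φ s) ^ 2 ≤ q ^ 2 * Φ M / M ^ p * (t - s) ^ p * (Φ s + Φ t) := by
  have hq := h.hq
  rcases (hs.trans hst).eq_or_lt with ht | ht
  · have : s = 0 := by linarith
    subst this
    rw [← ht]; simp [h.zero]
  have hM : 0 < M := ht.trans_le htM
  have h1 := h.diff hs hst ht
  have h0 : 0 ≤ Φ t - Φ s := sub_nonneg.2 (h.mono hs hst)
  have hPt := h.pos t ht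
  have hPs := h.nonneg hs
  set r := (t - s) / t with hr
  have hr0 : 0 ≤ r := div_nonneg (by linarith) ht.le
  have hr1 : r ≤ 1 := (div_le_one ht).2 (by linarith)
  have hr2 : r ^ 2 ≤ r ^ p := by
    rcases hr0.eq_or_lt with hz | hz
    · rw [← hz]; simp; positivity
    · rw [← Real.rpow_natCast r 2]
      exact Real.rpow_le_rpow_of_exponent_ge hz hr1 (by simpa using h.hp2)
  have h2 := h.inc t M ht htM
  have hPM := h.pos M hM
  calc (Φ t - Φ s) ^ 2 ≤ (q * Φ t * r) ^ 2 := by gcongr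
    _ = q ^ 2 * (Φ t * r ^ 2) * Φ t := by ring
    _ ≤ q ^ 2 * (((t / M) ^ p * Φ M) * r ^ p) * (Φ s + Φ t) := by
        gcongr
        linarith
    _ = q ^ 2 * Φ M / M ^ p * (t - s) ^ p * (Φ s + Φ t) := by
        have e : (t - s) ^ p = t ^ p * r ^ p := by
          rw [← Real.mul_rpow ht.le hr0, hr]; congr 1; field_simp
        rw [e, Real.div_rpow ht.le hM.le]
        ring

lemma lip_sq (h : GoodPhi Φ p q) {s t M : ℝ} (hs : |s| ≤ M) (ht : |t| ≤ M) (hM : 0 < M) :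
    (Φ |s| - Φ |t|) ^ 2 ≤ q ^ 2 * Φ M / M ^ p * |s - t| ^ p * (Φ |s| + Φ |t|) := by
  have hP := h.pos M hM
  have hp := h.hp1
  have h1 := h.nonneg (abs_nonneg s)
  have h2 := h.nonneg (abs_nonneg t)
  rcases le_total |s| |t| with hst | hst
  · have a := h.lip_sq_aux (abs_nonneg s) hst ht
    have b : |t| - |s| ≤ |s - t| := by rw [abs_sub_comm]; exact abs_sub_abs_le_abs_sub _ _
    calc (Φ |s| - Φ |t|) ^ 2 = (Φ |t| - Φ |s|) ^ 2 := by ring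
      _ ≤ _ := a
      _ ≤ _ := by
        gcongr
  · have a := h.lip_sq_aux (abs_nonneg t) hst hs
    have b : |s| - |t| ≤ |s - t| := abs_sub_abs_le_abs_sub _ _
    calc (Φ |s| - Φ |t|) ^ 2 ≤ _ := a
      _ ≤ q ^ 2 * Φ M / M ^ p * |s - t| ^ p * (Φ |t| + Φ |s|) := by
        gcongr
      _ = _ := by ring

lemma lip_aux (h : GoodPhi Φ p q) {s t M : ℝ} (hs : 0 ≤ s) (hst : s ≤ t) (htM : t ≤ M) :
    |Φ t - Φ s| ≤ q * Φ M / M * (t - s) := by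
  have hq := h.hq
  rw [abs_of_nonneg (sub_nonneg.2 (h.mono hs hst))]
  rcases (hs.trans hst).eq_or_lt with ht | ht
  · have : s = 0 := by linarith
    subst this
    rw [← ht]; simp
  have hM : 0 < M := ht.trans_le htM
  have h1 := h.diff hs hst ht
  have h2 := h.inc t M ht htM
  have h3 : (t / M) ^ p ≤ t / M := by
    have := Real.rpow_le_rpow_of_exponent_ge (by positivity : 0 < t / M) ((div_le_one hM).2 htM) h.hp1
    simpa using this
  have hPM := h.pos M hM
  have h4 : Φ t ≤ t / M * Φ M := h2.trans (by gcongr)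
  calc Φ t - Φ s ≤ q * Φ t * ((t - s) / t) := h1
    _ ≤ q * (t / M * Φ M) * ((t - s) / t) := by
        have : 0 ≤ (t - s) / t := div_nonneg (by linarith) ht.le
        gcongr
    _ = _ := by field_simp

lemma lip (h : GoodPhi Φ p q) {s t M : ℝ} (hs : |s| ≤ M) (ht : |t| ≤ M) (hM : 0 < M) :
    abs (Φ |s| - Φ |t|) ≤ q * Φ M / M * |s - t| := by
  have hP := h.pos M hM
  have hq := h.hq
  rcases le_total |s| |t| with hst | hst
  · have a := h.lip_aux (abs_nonneg s) hst ht
    have b : |t| - |s| ≤ |s - t| := by rw [abs_sub_comm]; exact abs_sub_abs_le_abs_sub _ _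
    rw [abs_sub_comm]
    exact a.trans (by gcongr)
  · have a := h.lip_aux (abs_nonneg t) hst hs
    have b : |s| - |t| ≤ |s - t| := abs_sub_abs_le_abs_sub _ _
    exact a.trans (by gcongr)

lemma cont (h : GoodPhi Φ p q) : Continuous (fun t : ℝ => Φ |t|) := by
  rw [continuous_iff_continuousAt]
  intro t
  have hM : 0 < |t| + 1 := by positivity
  have hP := h.pos _ hM
  have hq := h.hq
  rw [ContinuousAt, tendsto_iff_dist_tendsto_zero]
  have hlim : Filter.Tendsto (fun s => q * Φ (|t| + 1) / (|t| + 1) * |s - t|) (nhds t) (nhds 0) := by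
    have : Continuous (fun s => q * Φ (|t| + 1) / (|t| + 1) * |s - t|) := by fun_prop
    have := this.tendsto t
    simpa using this
  refine squeeze_zero' (Filter.Eventually.of_forall fun s => dist_nonneg) ?_ hlim
  filter_upwards [Metric.ball_mem_nhds t one_pos] with s hs
  rw [Metric.mem_ball, Real.dist_eq] at hs
  rw [Real.dist_eq]
  refine h.lip ?_ (by linarith : |t| ≤ |t| + 1) hM
  have := abs_sub_abs_le_abs_sub s t
  linarith

lemma tpow (h : GoodPhi Φ p q) (t : ℝ) : |t| ^ p ≤ 1 + Φ |t| / Φ 1 := by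
  have h1 := h.pos 1 one_pos
  have h0 := h.nonneg (abs_nonneg t)
  rcases le_total |t| 1 with ht | ht
  · have : |t| ^ p ≤ 1 := Real.rpow_le_one (abs_nonneg _) ht (by linarith [h.hp1])
    have : 0 ≤ Φ |t| / Φ 1 := by positivity
    linarith
  · have ht0 : 0 < |t| := by linarith
    have := h.inc 1 |t| one_pos ht
    rw [Real.div_rpow zero_le_one ht0.le, Real.one_rpow] at this
    have hp : 0 < |t| ^ p := Real.rpow_pos_of_pos ht0 _
    have : |t| ^ p ≤ Φ |t| / Φ 1 := by
      rw [le_div_iff₀ h1]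
      rw [div_mul_eq_mul_div, one_mul, le_div_iff₀ hp] at this
      linarith
    linarith

/-- `Φ(t/l) ≤ Φ(t)/l` -/
lemma scale_inc (h : GoodPhi Φ p q) {t l : ℝ} (ht : 0 ≤ t) (hl : 1 ≤ l) : Φ (t / l) ≤ Φ t / l := by
  have hl0 : 0 < l := by linarith
  rcases ht.eq_or_lt with rfl | ht
  · simp [h.zero]
  have := h.inc (t / l) t (by positivity) (div_le_self ht.le hl)
  have e : t / l / t = l⁻¹ := by field_simp
  rw [e] at this
  have h3 : l⁻¹ ^ p ≤ l⁻¹ := by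
    have := Real.rpow_le_rpow_of_exponent_ge (by positivity : 0 < l⁻¹) (inv_le_one_of_one_le₀ hl) h.hp1
    simpa using this
  have hP := h.pos t ht
  calc _ ≤ _ := this
    _ ≤ l⁻¹ * Φ t := by gcongr
    _ = _ := by ring

/-- `Φ(t) ≤ l^q Φ(t/l)` -/
lemma scale_dec (h : GoodPhi Φ p q) {t l : ℝ} (ht : 0 ≤ t) (hl : 1 ≤ l) : Φ t ≤ l ^ q * Φ (t / l) := by
  have hl0 : 0 < l := by linarith
  rcases ht.eq_or_lt with rfl | ht
  · simp [h.zero]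
  have := h.dec (t / l) t (by positivity) (div_le_self ht.le hl)
  have e : t / l / t = l⁻¹ := by field_simp
  rw [e, Real.inv_rpow hl0.le] at this
  have hp : 0 < l ^ q := Real.rpow_pos_of_pos hl0 _
  rw [inv_mul_eq_div, div_le_iff₀ hp] at this
  linarith

end GoodPhi
end

noncomputable section

lemma quantize {Ω : Type*} {k : ℕ} (a : Fin k → Ω) (w : Fin k → ℝ) (hw : ∀ i, 0 ≤ w i)
    (hw1 : ∑ i, w i = 1) (n : ℕ) (hn : 0 < n) :
    ∃ x : Fin n → Ω, ∀ (g : Ω → ℝ) (A : ℝ), (∀ y, |g y| ≤ A) →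
      |avgP x g - ∑ i, w i * g (a i)| ≤ 2 * k * A / n := by
  have hn' : (0:ℝ) < n := by exact_mod_cast hn
  have hk : 0 < k := by
    rcases Nat.eq_zero_or_pos k with rfl | h
    · simp at hw1
    · exact h
  set m : Fin k → ℕ := fun i => ⌊n * w i⌋₊ with hm
  have hm1 : ∀ i, (m i : ℝ) ≤ n * w i := fun i => Nat.floor_le (mul_nonneg hn'.le (hw i))
  have hm2 : ∀ i, n * w i ≤ m i + 1 := fun i => (Nat.lt_floor_add_one _).le
  have hsum : ∑ i, m i ≤ n := by
    have : ((∑ i, m i : ℕ) : ℝ) ≤ n := by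
      push_cast
      calc ∑ i, (m i : ℝ) ≤ ∑ i, n * w i := Finset.sum_le_sum fun i _ => hm1 i
        _ = n := by rw [← Finset.mul_sum, hw1, mul_one]
    exact_mod_cast this
  have hcard : Fintype.card ((Σ i, Fin (m i)) ⊕ Fin (n - ∑ i, m i)) = Fintype.card (Fin n) := by
    simp; omega
  let e := (Fintype.equivOfCardEq hcard)
  let f : ((Σ i, Fin (m i)) ⊕ Fin (n - ∑ i, m i)) → Ω := Sum.elim (fun z => a z.1) (fun _ => a ⟨0, hk⟩)
  refine ⟨fun j => f (e.symm j), fun g A hA => ?_⟩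
  have hs : ∑ j, g (f (e.symm j)) = ∑ i, m i * g (a i) + ((n:ℝ) - ∑ i, (m i : ℝ)) * g (a ⟨0, hk⟩) := by
    rw [Equiv.sum_comp e.symm (fun z => g (f z)), Fintype.sum_sum_type, Fintype.sum_sigma]
    simp [f, Nat.cast_sub hsum]
  have hA0 : 0 ≤ A := (abs_nonneg _).trans (hA (a ⟨0, hk⟩))
  rw [avgP, hs]
  have e1 : (∑ i, m i * g (a i) + ((n:ℝ) - ∑ i, (m i : ℝ)) * g (a ⟨0, hk⟩)) / n - ∑ i, w i * g (a i)
      = ((∑ i, ((m i : ℝ) - n * w i) * g (a i)) + ((n:ℝ) - ∑ i, (m i : ℝ)) * g (a ⟨0, hk⟩)) / n := by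
    rw [eq_div_iff hn'.ne', sub_mul, div_mul_cancel₀ _ hn'.ne', Finset.sum_mul]
    have : ∑ i, ((m i : ℝ) - n * w i) * g (a i) = ∑ i, m i * g (a i) - ∑ i, w i * g (a i) * n := by
      rw [← Finset.sum_sub_distrib]; exact Finset.sum_congr rfl fun i _ => by ring
    rw [this]; ring
  rw [e1, abs_div, abs_of_pos hn']
  gcongr
  have h1 : |∑ i, ((m i : ℝ) - n * w i) * g (a i)| ≤ k * A := by
    refine (Finset.abs_sum_le_sum_abs _ _).trans ?_
    calc _ ≤ ∑ i : Fin k, 1 * A := Finset.sum_le_sum fun i _ => by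
            rw [abs_mul]
            have : |(m i : ℝ) - n * w i| ≤ 1 := by
              rw [abs_le]; constructor <;> linarith [hm1 i, hm2 i]
            gcongr
            exact hA _
      _ = _ := by simp
  have h2 : |((n:ℝ) - ∑ i, (m i : ℝ)) * g (a ⟨0, hk⟩)| ≤ k * A := by
    rw [abs_mul]
    have h3 : (0:ℝ) ≤ (n:ℝ) - ∑ i, (m i : ℝ) := by
      have : ((∑ i, m i : ℕ) : ℝ) ≤ n := by exact_mod_cast hsum
      push_cast at this; linarith
    have h4 : (n:ℝ) - ∑ i, (m i : ℝ) ≤ k := by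
      have : ∑ i, n * w i ≤ ∑ i, ((m i : ℝ) + 1) := Finset.sum_le_sum fun i _ => hm2 i
      rw [← Finset.mul_sum, hw1, Finset.sum_add_distrib] at this
      simp at this
      linarith
    rw [abs_of_nonneg h3]
    gcongr
    exact hA _
  calc _ ≤ _ := abs_add_le _ _
    _ ≤ k * A + k * A := add_le_add h1 h2
    _ = _ := by ring

lemma stage_zero {Ω E : Type*} [TopologicalSpace Ω] [CompactSpace Ω] [MeasurableSpace Ω] [BorelSpace Ω]
    [NormedAddCommGroup E] (μ : Measure Ω) [IsProbabilityMeasure μ] (u : Ω → E) (hu : Continuous u)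
    (A η : ℝ) (hA : 0 < A) (hη : 0 < η) (Jmin : ℕ) :
    ∃ J0, Jmin ≤ J0 ∧ ∃ x : Fin (2 ^ J0) → Ω, ∀ g : Ω → ℝ, Continuous g → (∀ y, |g y| ≤ A) →
      (∀ y y', |g y - g y'| ≤ A * ‖u y - u y'‖) → |avgP x g - ∫ y, g y ∂μ| ≤ η := by
  have : Nonempty Ω := by
    by_contra h
    rw [not_nonempty_iff] at h
    have := measure_univ (μ := μ)
    simp [Set.univ_eq_empty_iff.2 h] at this
  set r := η / (2 * A) with hr
  have hr0 : 0 < r := by positivity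
  obtain ⟨t, ht⟩ := isCompact_univ.elim_finite_subcover (fun a : Ω => u ⁻¹' (Metric.ball (u a) r))
    (fun a => Metric.isOpen_ball.preimage hu) (fun y _ => Set.mem_iUnion.2 ⟨y, by simp [hr0]⟩)
  have htne : 0 < t.card := by
    rw [Finset.card_pos]
    obtain ⟨y⟩ := this
    obtain ⟨a, ha⟩ := Set.mem_iUnion.1 (ht (Set.mem_univ y))
    obtain ⟨ha, _⟩ := Set.mem_iUnion.1 ha
    exact ⟨a, ha⟩
  set k := t.card with hk
  let a : Fin k → Ω := fun i => (t.equivFin.symm i : Ω)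
  let F : ℕ → Fin k := fun j => if h : j < k then ⟨j, h⟩ else ⟨0, htne⟩
  have hex : ∀ y, ∃ j, u y ∈ Metric.ball (u (a (F j))) r := by
    intro y
    obtain ⟨b, hb⟩ := Set.mem_iUnion.1 (ht (Set.mem_univ y))
    obtain ⟨hb, hb'⟩ := Set.mem_iUnion.1 hb
    refine ⟨t.equivFin ⟨b, hb⟩, ?_⟩
    have : F (t.equivFin ⟨b, hb⟩) = t.equivFin ⟨b, hb⟩ := by simp [F, hk]
    rw [this]; simpa [a] using hb'
  classical
  let idx : Ω → Fin k := fun y => F (Nat.find (hex y))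
  have hidxm : Measurable idx := by
    have h1 : Measurable (fun y => Nat.find (hex y)) :=
      measurable_find hex (fun j => (Metric.isOpen_ball.preimage hu).measurableSet)
    exact (measurable_of_countable F).comp h1
  have hidx : ∀ y, ‖u y - u (a (idx y))‖ < r := fun y => by
    have := Nat.find_spec (hex y)
    rwa [Metric.mem_ball, dist_eq_norm] at this
  let w : Fin k → ℝ := fun i => (μ.map idx).real {i}
  have : IsProbabilityMeasure (μ.map idx) := Measure.isProbabilityMeasure_map hidxm.aemeasurable
  have hIsq : ∀ g : Fin k → ℝ, ∫ y, g (idx y) ∂μ = ∑ i, w i * g i := by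
    intro g
    rw [← integral_map (f := g) hidxm.aemeasurable (measurable_of_countable g).aestronglyMeasurable]
    rw [integral_fintype (Integrable.of_finite)]
    simp [w]
  have hw1 : ∑ i, w i = 1 := by
    have := hIsq (fun _ => 1)
    simpa using this.symm
  obtain ⟨J, hJ⟩ := pow_unbounded_of_one_lt (4 * k * A / η) (one_lt_two)
  set J0 := max J Jmin with hJ0
  obtain ⟨x, hx⟩ := quantize a w (fun i => measureReal_nonneg) hw1 (2 ^ J0) (by positivity)
  refine ⟨J0, le_max_right _ _, x, fun g hg hgA hgl => ?_⟩
  have h1 := hx g A hgA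
  have h2 : |∑ i, w i * g (a i) - ∫ y, g y ∂μ| ≤ η / 2 := by
    rw [← hIsq (fun i => g (a i)), ← integral_sub]
    · have : ‖∫ y, (g (a (idx y)) - g y) ∂μ‖ ≤ (η / 2) * μ.real Set.univ := by
        refine norm_integral_le_of_norm_le_const (Filter.Eventually.of_forall fun y => ?_)
        rw [Real.norm_eq_abs, abs_sub_comm]
        refine (hgl _ _).trans ?_
        calc A * ‖u y - u (a (idx y))‖ ≤ A * r := by gcongr; exact (hidx y).le
          _ = _ := by rw [hr]; field_simp
      simpa using this
    · refine Integrable.of_bound ((measurable_of_countable (fun i => g (a i))).comp hidxm).aestronglyMeasurable A (Filter.Eventually.of_forall fun y => hgA _)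
    · exact Integrable.of_bound hg.measurable.aestronglyMeasurable A (Filter.Eventually.of_forall fun y => hgA _)
  have h3 : 2 * k * A / ((2 ^ J0 : ℕ) : ℝ) ≤ η / 2 := by
    have : (2:ℝ) ^ J ≤ 2 ^ J0 := pow_le_pow_right₀ one_le_two (le_max_left _ _)
    push_cast
    rw [div_le_iff₀ (by positivity)]
    rw [div_lt_iff₀ hη] at hJ
    nlinarith
  calc _ = |(avgP x g - ∑ i, w i * g (a i)) + (∑ i, w i * g (a i) - ∫ y, g y ∂μ)| := by congr 1; ring
    _ ≤ _ := abs_add_le _ _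
    _ ≤ η / 2 + η / 2 := add_le_add (h1.trans h3) h2
    _ = η := by ring
end

noncomputable section
set_option linter.unusedSectionVars false

/-- chain data from euclidean nets -/
def eucChain {V E : Type*} [NormedAddCommGroup E] [NormedSpace ℝ E] [FiniteDimensional ℝ E]
    (F : Set E) (φ : E → V → ℝ) (R W : ℝ) (hR : 0 < R) (hW : 0 ≤ W)
    (h0 : (0 : E) ∈ F) (hφ0 : ∀ v, φ 0 v = 0) (hφn : ∀ c v, 0 ≤ φ c v)
    (hF : ∀ c ∈ F, ‖c‖ ≤ R)
    (hl : ∀ k : ℕ, ∀ c ∈ F, ∀ c' ∈ F, ‖c - c'‖ ≤ R / 2 ^ k → ∀ v,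
      (φ c v - φ c' v) ^ 2 ≤ W ^ 2 * (1 / 2) ^ k * (φ c v + φ c' v)) : ChainData V E where
  F := F
  φ := φ
  rel k c c' := ‖c - c'‖ ≤ R / 2 ^ k
  w k := W * Real.sqrt ((1 / 2) ^ k)
  a _ := 2 * (Module.finrank ℝ E : ℝ)
  c0 := 0
  hw k := by positivity
  hc0 := h0
  hφ0 := hφ0
  hφn := hφn
  hroot c hc := by simpa using hF c hc
  hlip k c hc c' hc' hr v := by
    rw [mul_pow, Real.sq_sqrt (by positivity)]
    exact hl k c hc c' hc' hr v
  hcov k g hg := by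
    obtain ⟨T, h1, h2, h3, h4⟩ := euclid_cov F g (R / 2 ^ k) (by positivity)
    refine ⟨T, h1, h2, h3, fun f hf hr => ?_⟩
    obtain ⟨h, hh, hh'⟩ := h4 f hf hr
    refine ⟨h, hh, ?_⟩
    rw [pow_succ, ← div_div]; exact hh'

lemma geom_aux (k : ℕ) : Real.sqrt (((k:ℝ) + 1) * (1 / 2) ^ k) ≤ 3 * (3 / 4) ^ k := by
  rw [Real.sqrt_le_left (by positivity)]
  have h := one_add_mul_le_pow (a := (1/8:ℝ)) (by norm_num) k
  have e : ((3:ℝ) * (3 / 4) ^ k) ^ 2 = 9 * ((1 + 1 / 8) ^ k * (1 / 2) ^ k) := by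
    rw [mul_pow, ← pow_mul, mul_comm k 2, pow_mul, ← mul_pow]; norm_num
  rw [e, ← mul_assoc]
  gcongr
  have : (0:ℝ) ≤ k := by positivity
  linarith

lemma geom_sum_aux (L : ℕ) : ∑ k ∈ Finset.range L, ((3:ℝ) / 4) ^ k ≤ 4 := by
  have h := Summable.sum_le_tsum (Finset.range L) (fun k _ => by positivity)
    (summable_geometric_of_lt_one (by norm_num : (0:ℝ) ≤ 3 / 4) (by norm_num))
  rw [tsum_geometric_of_lt_one (by norm_num) (by norm_num)] at h
  norm_num at h ⊢
  exact h

lemma eucChain_bd {V E : Type*} [NormedAddCommGroup E] [NormedSpace ℝ E] [FiniteDimensional ℝ E]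
    (D : ChainData V E) (W : ℝ) (hW : 0 ≤ W) (hw : ∀ k, D.w k = W * Real.sqrt ((1 / 2) ^ k))
    (ha : ∀ k, D.a k = 2 * (Module.finrank ℝ E : ℝ)) (hN : 1 ≤ Module.finrank ℝ E) (j : ℕ) :
    D.bd j (2 ^ j) ≤ 43 * Real.sqrt (Module.finrank ℝ E) * W := by
  set N : ℝ := (Module.finrank ℝ E : ℝ) with hNd
  have hN1 : 1 ≤ N := by rw [hNd]; exact_mod_cast hN
  have hs1 : 1 ≤ Real.sqrt N := Real.one_le_sqrt.2 hN1
  have h1 : ∀ k, D.u k * D.w k ≤ 10.5 * Real.sqrt N * W * (3 / 4) ^ k := by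
    intro k
    have hu : D.u k ≤ 3.5 * Real.sqrt N * Real.sqrt ((k:ℝ) + 1) := by
      rw [ChainData.u, Real.sqrt_le_left (by positivity), mul_pow, mul_pow, Real.sq_sqrt (by linarith), Real.sq_sqrt (by positivity)]
      simp only [ha, Finset.sum_const, Finset.card_range, nsmul_eq_mul]
      push_cast
      have : (0:ℝ) ≤ k := by positivity
      nlinarith
    rw [hw]
    calc D.u k * (W * Real.sqrt ((1 / 2) ^ k)) ≤ 3.5 * Real.sqrt N * Real.sqrt ((k:ℝ) + 1) * (W * Real.sqrt ((1 / 2) ^ k)) := by gcongr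
      _ = 3.5 * Real.sqrt N * W * Real.sqrt (((k:ℝ) + 1) * (1 / 2) ^ k) := by
          rw [Real.sqrt_mul (by positivity)]; ring
      _ ≤ 3.5 * Real.sqrt N * W * (3 * (3 / 4) ^ k) := by
          gcongr; exact geom_aux k
      _ = _ := by ring
  have h2 : Real.sqrt ((2 ^ j : ℕ) : ℝ) * D.w j = W := by
    rw [hw]
    have : Real.sqrt ((2 ^ j : ℕ) : ℝ) * Real.sqrt ((1 / 2) ^ j) = 1 := by
      rw [← Real.sqrt_mul (by positivity)]; push_cast; rw [← mul_pow]; norm_num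
    calc _ = W * (Real.sqrt ((2 ^ j : ℕ) : ℝ) * Real.sqrt ((1 / 2) ^ j)) := by ring
      _ = W := by rw [this, mul_one]
  rw [ChainData.bd, h2]
  calc _ ≤ ∑ k ∈ Finset.range j, 10.5 * Real.sqrt N * W * (3 / 4) ^ k + W := by
        have := Finset.sum_le_sum (s := Finset.range j) (fun k _ => h1 k)
        linarith
    _ = 10.5 * Real.sqrt N * W * (∑ k ∈ Finset.range j, (3 / 4) ^ k) + W := by rw [Finset.mul_sum]
    _ ≤ 10.5 * Real.sqrt N * W * 4 + Real.sqrt N * W := by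
        gcongr
        · exact geom_sum_aux j
        · nlinarith
    _ = _ := by ring

/-- the coordinatized problem -/
structure Setup {Ω E : Type*} [TopologicalSpace Ω] [MeasurableSpace Ω]
    [NormedAddCommGroup E] [InnerProductSpace ℝ E] (μ : Measure Ω) (u : Ω → E) (K : ℝ) : Prop where
  hu : Continuous u
  hIsq : ∀ c, ∫ y, (inner ℝ c (u y)) ^ 2 ∂μ = ‖c‖ ^ 2
  hK : ∀ y, ‖u y‖ ^ 2 ≤ K
  hN : 1 ≤ Module.finrank ℝ E
  hNK : (Module.finrank ℝ E : ℝ) ≤ K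

section
variable {Ω E : Type*} [TopologicalSpace Ω] [CompactSpace Ω] [MeasurableSpace Ω] [BorelSpace Ω]
    [NormedAddCommGroup E] [InnerProductSpace ℝ E] {μ : Measure Ω} [IsProbabilityMeasure μ]
    {u : Ω → E} {K : ℝ} {Φ : ℝ → ℝ} {p q : ℝ}

lemma Setup.K1 (S : Setup μ u K) : 1 ≤ K := by
  have h1 := S.hN
  have h2 := S.hNK
  have : (1:ℝ) ≤ (Module.finrank ℝ E : ℝ) := by exact_mod_cast h1
  linarith

/-- unit ball -/
def ballPhi (μ : Measure Ω) (u : Ω → E) (Φ : ℝ → ℝ) : Set E := {c | ∫ y, Φ |inner ℝ c (u y)| ∂μ ≤ 1}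

lemma cont_int (μ : Measure Ω) [IsProbabilityMeasure μ] {g : Ω → ℝ} (hg : Continuous g) : Integrable g μ := by
  obtain ⟨C, hC⟩ := isCompact_univ.exists_bound_of_continuousOn (f := g) hg.continuousOn
  exact Integrable.of_bound hg.measurable.aestronglyMeasurable C (Filter.Eventually.of_forall fun y => hC y (Set.mem_univ y))

lemma prob_nonempty (μ : Measure Ω) [IsProbabilityMeasure μ] : Nonempty Ω := by
  by_contra h
  rw [not_nonempty_iff] at h
  have := measure_univ (μ := μ)
  simp [Set.univ_eq_empty_iff.2 h] at this

lemma Setup.cont_in (S : Setup μ u K) (c : E) : Continuous fun y => inner ℝ c (u y) := by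
  have := S.hu
  fun_prop

lemma Setup.cont_phi (S : Setup μ u K) (h : GoodPhi Φ p q) (c : E) : Continuous fun y => Φ |inner ℝ c (u y)| :=
  h.cont.comp (S.cont_in c)

lemma Setup.ball_bound (S : Setup μ u K) (h : GoodPhi Φ p q) {c : E} (hc : c ∈ ballPhi μ u Φ) :
    (∀ y, |inner ℝ c (u y)| ≤ ((1 + 1 / Φ 1) * K) ^ (1 / p)) ∧ ‖c‖ ≤ ((1 + 1 / Φ 1) * K) ^ (1 / p) := by
  have hK1 := S.K1
  have hΦ1 := h.pos 1 one_pos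
  have hp1 := h.hp1
  have hp2 := h.hp2
  have hcy := S.cont_in c
  have hc' : ∫ y, Φ |inner ℝ c (u y)| ∂μ ≤ 1 := hc
  have := prob_nonempty μ
  obtain ⟨y0, _, hy0⟩ := isCompact_univ.exists_isMaxOn (Set.univ_nonempty) (hcy.abs.continuousOn)
  set s := |inner ℝ c (u y0)| with hs
  have hle : ∀ y, |inner ℝ c (u y)| ≤ s := fun y => hy0 (Set.mem_univ y)
  have hs0 : 0 ≤ s := abs_nonneg _
  have hpc : Continuous fun y => |inner ℝ c (u y)| ^ p :=
    hcy.abs.rpow_const (fun _ => Or.inr (by linarith))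
  have hip : ∫ y, |inner ℝ c (u y)| ^ p ∂μ ≤ 1 + 1 / Φ 1 := by
    have h1 : ∫ y, |inner ℝ c (u y)| ^ p ∂μ ≤ ∫ y, (1 + Φ |inner ℝ c (u y)| / Φ 1) ∂μ := by
      refine integral_mono (cont_int μ hpc) (cont_int μ ?_) (fun y => h.tpow _)
      exact continuous_const.add ((S.cont_phi h c).div_const _)
    rw [integral_add (integrable_const _) ((cont_int μ (S.cont_phi h c)).div_const _), integral_div] at h1
    simp at h1
    have : (∫ y, Φ |inner ℝ c (u y)| ∂μ) / Φ 1 ≤ 1 / Φ 1 := by gcongr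
    linarith
  have h2 : ‖c‖ ^ 2 ≤ s ^ (2 - p) * (1 + 1 / Φ 1) := by
    rw [← S.hIsq c]
    calc ∫ y, (inner ℝ c (u y)) ^ 2 ∂μ ≤ ∫ y, s ^ (2 - p) * |inner ℝ c (u y)| ^ p ∂μ := by
          refine integral_mono (cont_int μ (by fun_prop)) (cont_int μ (by fun_prop)) (fun y => ?_)
          have a0 := abs_nonneg (inner ℝ c (u y))
          rcases a0.eq_or_lt with hz | hz
          · have : inner ℝ c (u y) = 0 := abs_eq_zero.1 hz.symm
            simp only [this]
            simp
            positivity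
          · have : (inner ℝ c (u y)) ^ 2 = |inner ℝ c (u y)| ^ (2 - p) * |inner ℝ c (u y)| ^ p := by
              rw [← Real.rpow_add hz]; simp
            simp only [this]
            have := Real.rpow_le_rpow hz.le (hle y) (by linarith : 0 ≤ 2 - p)
            gcongr
      _ = s ^ (2 - p) * ∫ y, |inner ℝ c (u y)| ^ p ∂μ := integral_const_mul _ _
      _ ≤ _ := by gcongr
  have h3 : s ^ 2 ≤ K * ‖c‖ ^ 2 := by
    have := abs_real_inner_le_norm c (u y0)
    calc s ^ 2 ≤ (‖c‖ * ‖u y0‖) ^ 2 := by gcongr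
      _ = ‖u y0‖ ^ 2 * ‖c‖ ^ 2 := by ring
      _ ≤ _ := by gcongr; exact S.hK y0
  have hC0 : 0 ≤ (1 + 1 / Φ 1) * K := by positivity
  have hsM : s ≤ ((1 + 1 / Φ 1) * K) ^ (1 / p) := by
    rcases hs0.eq_or_lt with hz | hz
    · rw [← hz]; positivity
    · have h4 : s ^ p ≤ (1 + 1 / Φ 1) * K := by
        have e : s ^ 2 = s ^ (2 - p) * s ^ p := by rw [← Real.rpow_add hz]; simp
        have hsp : 0 < s ^ (2 - p) := Real.rpow_pos_of_pos hz _
        have : s ^ (2 - p) * s ^ p ≤ s ^ (2 - p) * ((1 + 1 / Φ 1) * K) := by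
          rw [← e]
          calc s ^ 2 ≤ K * ‖c‖ ^ 2 := h3
            _ ≤ K * (s ^ (2 - p) * (1 + 1 / Φ 1)) := by gcongr
            _ = _ := by ring
        exact le_of_mul_le_mul_left this hsp
      rw [one_div p, Real.le_rpow_inv_iff_of_pos hs0 hC0 (by linarith)]
      exact h4
  refine ⟨fun y => (hle y).trans hsM, ?_⟩
  have h5 : ‖c‖ ^ 2 ≤ s ^ 2 := by
    rw [← S.hIsq c]
    calc ∫ y, (inner ℝ c (u y)) ^ 2 ∂μ ≤ ∫ y, s ^ 2 ∂μ := by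
          refine integral_mono (cont_int μ (by fun_prop)) (integrable_const _) (fun y => ?_)
          simp only
          rw [← sq_abs]
          gcongr
          exact hle y
      _ = s ^ 2 := by simp
  exact ((le_abs_self _).trans (abs_le_of_sq_le_sq h5 hs0)).trans hsM
end
end

noncomputable section
set_option linter.unusedSectionVars false
section
variable {Ω E : Type*} [TopologicalSpace Ω] [CompactSpace Ω] [MeasurableSpace Ω] [BorelSpace Ω]
    [NormedAddCommGroup E] [InnerProductSpace ℝ E] {μ : Measure Ω} [IsProbabilityMeasure μ]
    {u : Ω → E} {K : ℝ} {Φ : ℝ → ℝ} {p q : ℝ}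

/-- the sup bound -/
def bigM (Φ : ℝ → ℝ) (p K : ℝ) : ℝ := ((1 + 1 / Φ 1) * K) ^ (1 / p)

lemma bigM_pos (h : GoodPhi Φ p q) (hK : 1 ≤ K) : 0 < bigM Φ p K := by
  have := h.pos 1 one_pos
  unfold bigM; positivity

lemma bigM_pow (h : GoodPhi Φ p q) (hK : 1 ≤ K) : bigM Φ p K ^ p = (1 + 1 / Φ 1) * K := by
  have := h.pos 1 one_pos
  have hp := h.hp1
  rw [bigM, ← Real.rpow_mul (by positivity), one_div_mul_cancel (by linarith), Real.rpow_one]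

lemma bigM_one (h : GoodPhi Φ p q) (hK : 1 ≤ K) : 1 ≤ bigM Φ p K := by
  have := h.pos 1 one_pos
  have hp := h.hp1
  refine Real.one_le_rpow ?_ (by positivity)
  have : 0 < 1 / Φ 1 := by positivity
  nlinarith

lemma bigM_phi (h : GoodPhi Φ p q) (hK : 1 ≤ K) : 1 ≤ Φ (bigM Φ p K) := by
  have h1 := h.pos 1 one_pos
  have h2 := h.inc 1 _ one_pos (bigM_one h hK)
  have hM := bigM_pos h hK
  rw [Real.div_rpow zero_le_one hM.le, Real.one_rpow, bigM_pow h hK, div_mul_eq_mul_div, one_mul, le_div_iff₀ (by positivity)] at h2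
  have : Φ 1 * ((1 + 1 / Φ 1) * K) = (Φ 1 + 1) * K := by field_simp
  nlinarith

lemma Setup.nu (S : Setup μ u K) (y : Ω) : ‖u y‖ ≤ Real.sqrt K := Real.le_sqrt_of_sq_le (S.hK y)

lemma Setup.stage_one [FiniteDimensional ℝ E] (S : Setup μ u K) (h : GoodPhi Φ p q) (δ : ℝ) (hδ : 0 < δ) (hδ1 : δ ≤ 1) (J : ℕ)
    (hJ : 7 * (43 * Real.sqrt (Module.finrank ℝ E) * (2 * q * Real.sqrt (Φ (bigM Φ p K) * K))) / Real.sqrt (2 ^ J) ≤ δ / 4) :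
    ∃ y : Fin (2 ^ J) → Ω,
      (∀ c ∈ ballPhi μ u Φ, |avgP y (fun z => Φ |inner ℝ c (u z)|) - ∫ z, Φ |inner ℝ c (u z)| ∂μ| ≤ δ / 2) ∧
      (∀ c, ‖c‖ ^ 2 / 2 ≤ avgP y (fun z => (inner ℝ c (u z)) ^ 2)) := by
  have hK1 := S.K1
  have hp1 := h.hp1
  have hp2 := h.hp2
  have hq := h.hq
  have hM := bigM_pos h hK1
  have hΦM := bigM_phi h hK1
  have hMb : ∀ c ∈ ballPhi μ u Φ, (∀ y, |inner ℝ c (u y)| ≤ bigM Φ p K) ∧ ‖c‖ ≤ bigM Φ p K :=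
    fun c hc => S.ball_bound h hc
  set M := bigM Φ p K with hMdef
  set W := 2 * q * Real.sqrt (Φ M * K) with hW
  have hW0 : 0 ≤ W := by positivity
  have hW2 : W ^ 2 = 4 * q ^ 2 * (Φ M * K) := by
    rw [hW, mul_pow, Real.sq_sqrt (by positivity)]; ring
  have hq2 : 1 ≤ q ^ 2 := one_le_pow₀ hq
  let D1 : ChainData Ω E := eucChain (ballPhi μ u Φ) (fun c y => Φ |inner ℝ c (u y)|) M W hM hW0
    (by simp [ballPhi, h.zero]) (by simp [h.zero]) (fun c v => h.nonneg (abs_nonneg _))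
    (fun c hc => (hMb c hc).2) (by
      intro k c hc c' hc' hr v
      have h1 := h.lip_sq ((hMb c hc).1 v) ((hMb c' hc').1 v) hM
      have hn1 := h.nonneg (abs_nonneg (inner ℝ c (u v)))
      have hn2 := h.nonneg (abs_nonneg (inner ℝ c' (u v)))
      refine h1.trans ?_
      refine mul_le_mul_of_nonneg_right ?_ (by linarith)
      have h2 : |inner ℝ c (u v) - inner ℝ c' (u v)| ≤ M / 2 ^ k * Real.sqrt K := by
        rw [← inner_sub_left]
        refine (abs_real_inner_le_norm _ _).trans ?_
        gcongr
        exact S.nu v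
      have h3 : |inner ℝ c (u v) - inner ℝ c' (u v)| ^ p ≤ M ^ p * ((1/2) ^ k * K) := by
        calc _ ≤ (M / 2 ^ k * Real.sqrt K) ^ p := Real.rpow_le_rpow (abs_nonneg _) h2 (by linarith)
          _ = M ^ p * (((1/2) ^ k) ^ p * (Real.sqrt K) ^ p) := by
              rw [← Real.mul_rpow (by positivity) (by positivity), ← Real.mul_rpow (by positivity) (by positivity)]
              congr 1
              rw [div_pow, one_pow]; ring
          _ ≤ _ := by
              gcongr
              · have := Real.rpow_le_rpow_of_exponent_ge (by positivity : (0:ℝ) < (1/2) ^ k) (pow_le_one₀ (by norm_num) (by norm_num)) hp1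
                simpa using this
              · have := Real.rpow_le_rpow_of_exponent_le (Real.one_le_sqrt.2 hK1) hp2
                simpa [Real.sq_sqrt (by linarith : 0 ≤ K)] using this
      calc q ^ 2 * Φ M / M ^ p * |inner ℝ c (u v) - inner ℝ c' (u v)| ^ p
          ≤ q ^ 2 * Φ M / M ^ p * (M ^ p * ((1/2) ^ k * K)) := by gcongr
        _ = q ^ 2 * (Φ M * K) * (1/2) ^ k := by
            have : M ^ p ≠ 0 := (Real.rpow_pos_of_pos hM p).ne'
            field_simp
        _ ≤ _ := by
            rw [hW2]
            gcongr
            nlinarith)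
  let D2 : ChainData Ω E := eucChain {c | ‖c‖ ≤ 1} (fun c y => (inner ℝ c (u y)) ^ 2) 1 W one_pos hW0
    (by simp) (by simp) (fun c v => sq_nonneg _)
    (fun c hc => hc) (by
      intro k c hc c' hc' hr v
      set s := inner ℝ c (u v)
      set t := inner ℝ c' (u v)
      have h2 : |s - t| ≤ 1 / 2 ^ k * Real.sqrt K := by
        simp only [s, t]
        rw [← inner_sub_left]
        refine (abs_real_inner_le_norm _ _).trans ?_
        gcongr
        exact S.nu v
      have h3 : (s - t) ^ 2 ≤ (1 / 2) ^ k * K := by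
        rw [← sq_abs]
        calc |s - t| ^ 2 ≤ (1 / 2 ^ k * Real.sqrt K) ^ 2 := by gcongr
          _ = (1/2) ^ k * (1/2) ^ k * K := by
            rw [mul_pow, Real.sq_sqrt (by linarith), div_pow, div_pow]; ring
          _ ≤ (1/2) ^ k * 1 * K := by
            gcongr
            exact pow_le_one₀ (by norm_num) (by norm_num)
          _ = _ := by ring
      calc (s ^ 2 - t ^ 2) ^ 2 = (s - t) ^ 2 * (s + t) ^ 2 := by ring
        _ ≤ (s - t) ^ 2 * (2 * (s ^ 2 + t ^ 2)) := by
            gcongr; nlinarith [sq_nonneg (s - t)]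
        _ ≤ ((1 / 2) ^ k * K) * (2 * (s ^ 2 + t ^ 2)) := by gcongr
        _ = (2 * K) * (1/2) ^ k * (s ^ 2 + t ^ 2) := by ring
        _ ≤ _ := by
            rw [hW2]
            gcongr
            · nlinarith
            · nlinarith)
  have hA : 0 < q * Φ M + 2 * K := by positivity
  obtain ⟨J0, hJ0, x, hx⟩ := stage_zero μ u S.hu (q * Φ M + 2 * K) (δ / 4) hA (by positivity) J
  have hsqK : Real.sqrt K ≤ K := by
    rw [Real.sqrt_le_left (by linarith)]; nlinarith
  obtain ⟨y, hy1, hy2⟩ := halve_iter D1 D2 J0 x (fun c => ∫ z, Φ |inner ℝ c (u z)| ∂μ) (fun c => ‖c‖ ^ 2) (δ / 4)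
    (43 * Real.sqrt (Module.finrank ℝ E) * W) (by positivity) (fun c hc => hc)
    (fun c hc => pow_le_one₀ (norm_nonneg _) hc)
    (by
      intro c hc
      refine hx _ (S.cont_phi h c) (fun y => ?_) (fun y y' => ?_)
      · change abs (Φ |inner ℝ c (u y)|) ≤ _
        rw [abs_of_nonneg (h.nonneg (abs_nonneg _))]
        have := h.mono (abs_nonneg _) ((hMb c hc).1 y)
        nlinarith
      · refine (h.lip ((hMb c hc).1 y) ((hMb c hc).1 y') hM).trans ?_
        rw [← inner_sub_right]
        have h2 := (abs_real_inner_le_norm c (u y - u y'))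
        calc q * Φ M / M * |inner ℝ c (u y - u y')| ≤ q * Φ M / M * (M * ‖u y - u y'‖) := by
              gcongr
              refine h2.trans ?_
              gcongr
              exact (hMb c hc).2
          _ = q * Φ M * ‖u y - u y'‖ := by field_simp
          _ ≤ _ := by gcongr; linarith)
    (by
      intro c hc
      have hc : ‖c‖ ≤ 1 := hc
      have hin : ∀ z, |inner ℝ c (u z)| ≤ Real.sqrt K := fun z => by
        refine (abs_real_inner_le_norm c (u z)).trans ?_
        calc ‖c‖ * ‖u z‖ ≤ 1 * Real.sqrt K := by gcongr; exact S.nu z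
          _ = _ := one_mul _
      change |avgP x (fun z => (inner ℝ c (u z)) ^ 2) - ‖c‖ ^ 2| ≤ δ / 4
      rw [← S.hIsq c]
      have := S.cont_in c
      refine hx _ (by fun_prop) (fun y => ?_) (fun y y' => ?_)
      · rw [abs_of_nonneg (sq_nonneg _), ← sq_abs]
        have : |inner ℝ c (u y)| ^ 2 ≤ (Real.sqrt K) ^ 2 := by gcongr; exact hin y
        rw [Real.sq_sqrt (by linarith)] at this
        have : 0 ≤ q * Φ M := by positivity
        linarith
      · have e : (inner ℝ c (u y)) ^ 2 - (inner ℝ c (u y')) ^ 2 = (inner ℝ c (u y) + inner ℝ c (u y')) * inner ℝ c (u y - u y') := by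
          rw [inner_sub_right]; ring
        rw [e, abs_mul]
        have h2 := (abs_real_inner_le_norm c (u y - u y'))
        have h3 : |inner ℝ c (u y) + inner ℝ c (u y')| ≤ 2 * K := by
          refine (abs_add_le _ _).trans ?_
          linarith [hin y, hin y']
        calc _ ≤ (2 * K) * (1 * ‖u y - u y'‖) := by
              gcongr
              exact h2.trans (by gcongr)
          _ ≤ _ := by
              rw [one_mul]; gcongr
              have : 0 ≤ q * Φ M := by positivity
              linarith)
    (fun j _ => ⟨j, eucChain_bd D1 W hW0 (fun _ => rfl) (fun _ => rfl) S.hN j⟩)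
    (fun j _ => ⟨j, eucChain_bd D2 W hW0 (fun _ => rfl) (fun _ => rfl) S.hN j⟩) J hJ0 (by linarith)
  refine ⟨y, fun c hc => (hy1 c hc).trans (by linarith), fun c => ?_⟩
  rcases eq_or_ne c 0 with rfl | hc
  · simp [avgP]
  have hcn : 0 < ‖c‖ := norm_pos_iff.2 hc
  have h1 := hy2 (‖c‖⁻¹ • c) (show ‖‖c‖⁻¹ • c‖ ≤ 1 by rw [norm_smul, norm_inv, norm_norm, inv_mul_cancel₀ hcn.ne'])
  have e1 : avgP y (D2.φ (‖c‖⁻¹ • c)) = avgP y (fun z => (inner ℝ c (u z)) ^ 2) / ‖c‖ ^ 2 := by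
    change avgP y (fun z => (inner ℝ (‖c‖⁻¹ • c) (u z)) ^ 2) = _
    simp only [avgP, real_inner_smul_left, mul_pow, ← Finset.mul_sum]
    field_simp
  have e2 : ‖‖c‖⁻¹ • c‖ ^ 2 = 1 := by rw [norm_smul, norm_inv, norm_norm, inv_mul_cancel₀ hcn.ne', one_pow]
  simp only [e1, e2] at h1
  have h3 := (abs_le.1 h1).1
  have h4 : 1 / 2 ≤ avgP y (fun z => (inner ℝ c (u z)) ^ 2) / ‖c‖ ^ 2 := by linarith
  rw [le_div_iff₀ (by positivity)] at h4
  linarith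
end
end

noncomputable section
set_option linter.unusedSectionVars false
section
variable {Ω E : Type*} [TopologicalSpace Ω] [CompactSpace Ω] [MeasurableSpace Ω] [BorelSpace Ω]
    [NormedAddCommGroup E] [InnerProductSpace ℝ E] [FiniteDimensional ℝ E] [MeasurableSpace E] [BorelSpace E]
    {μ : Measure Ω} [IsProbabilityMeasure μ]
    {u : Ω → E} {K : ℝ} {Φ : ℝ → ℝ} {p q : ℝ}

lemma avgP_mono {V : Type*} {n : ℕ} (x : Fin n → V) {f g : V → ℝ} (hfg : ∀ i, f (x i) ≤ g (x i)) : avgP x f ≤ avgP x g := by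
  unfold avgP
  gcongr with i
  exact hfg i

lemma abs_sub_rpow (hp1 : 1 ≤ p) (hp2 : p ≤ 2) (a b : ℝ) : |a - b| ^ p ≤ 2 * (|a| ^ p + |b| ^ p) := by
  have h1 : |a - b| ≤ |a| + |b| := abs_sub a b
  have h3 : (|a| + |b|) ^ p ≤ (2:ℝ) ^ (p - 1) * (|a| ^ p + |b| ^ p) := by
    have := NNReal.rpow_add_le_mul_rpow_add_rpow ⟨|a|, abs_nonneg a⟩ ⟨|b|, abs_nonneg b⟩ hp1
    have h4 := NNReal.coe_le_coe.2 this
    push_cast at h4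
    exact h4
  have h4 : (2:ℝ) ^ (p - 1) ≤ 2 := by
    have := Real.rpow_le_rpow_of_exponent_le one_le_two (by linarith : p - 1 ≤ 1)
    simpa using this
  calc |a - b| ^ p ≤ (|a| + |b|) ^ p := Real.rpow_le_rpow (abs_nonneg _) h1 (by linarith)
    _ ≤ _ := h3
    _ ≤ _ := by gcongr

lemma Setup.diff_norm (S : Setup μ u K) (h : GoodPhi Φ p q) (δ : ℝ) (hδ1 : δ ≤ 1) {n : ℕ} (hn : 0 < n)
    (y : Fin n → Ω)
    (hy1 : ∀ c ∈ ballPhi μ u Φ, |avgP y (fun z => Φ |inner ℝ c (u z)|) - ∫ z, Φ |inner ℝ c (u z)| ∂μ| ≤ δ / 2)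
    (hy2 : ∀ c, ‖c‖ ^ 2 / 2 ≤ avgP y (fun z => (inner ℝ c (u z)) ^ 2))
    (c c' : E) (hc : c ∈ ballPhi μ u Φ) (hc' : c' ∈ ballPhi μ u Φ) (s : ℝ) (hs : 0 < s)
    (hcc : ∀ j, |inner ℝ (c - c') (u (y j))| ≤ s) : ‖c - c'‖ ^ 2 ≤ 16 * (1 + 1 / Φ 1) * s ^ (2 - p) := by
  have hp1 := h.hp1
  have hp2 := h.hp2
  have h1 := h.pos 1 one_pos
  have hn' : (0:ℝ) < n := by exact_mod_cast hn
  have key : ∀ c ∈ ballPhi μ u Φ, avgP y (fun z => |inner ℝ c (u z)| ^ p) ≤ 2 * (1 + 1 / Φ 1) := by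
    intro c hc
    have a1 : avgP y (fun z => Φ |inner ℝ c (u z)|) ≤ 2 := by
      have := (abs_le.1 (hy1 c hc)).2
      have hc : ∫ z, Φ |inner ℝ c (u z)| ∂μ ≤ 1 := hc
      linarith
    have a2 : avgP y (fun z => |inner ℝ c (u z)| ^ p) ≤ avgP y (fun z => 1 + Φ |inner ℝ c (u z)| / Φ 1) :=
      avgP_mono y (fun i => h.tpow _)
    have a3 : avgP y (fun z => 1 + Φ |inner ℝ c (u z)| / Φ 1) = 1 + avgP y (fun z => Φ |inner ℝ c (u z)|) / Φ 1 := by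
      simp only [avgP, Finset.sum_add_distrib, ← Finset.sum_div]
      simp
      field_simp
    have a4 : avgP y (fun z => Φ |inner ℝ c (u z)|) / Φ 1 ≤ 2 / Φ 1 := by gcongr
    have a5 : 2 / Φ 1 = 2 * (1 / Φ 1) := by ring
    linarith
  have b1 := hy2 (c - c')
  have b2 : avgP y (fun z => (inner ℝ (c - c') (u z)) ^ 2) ≤ avgP y (fun z => s ^ (2 - p) * (2 * (|inner ℝ c (u z)| ^ p + |inner ℝ c' (u z)| ^ p))) := by
    refine avgP_mono y (fun j => ?_)
    have hz0 := abs_nonneg (inner ℝ (c - c') (u (y j)))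
    have hle : (inner ℝ (c - c') (u (y j))) ^ 2 ≤ s ^ (2 - p) * |inner ℝ (c - c') (u (y j))| ^ p := by
      rcases hz0.eq_or_lt with hz | hz
      · have : inner ℝ (c - c') (u (y j)) = 0 := abs_eq_zero.1 hz.symm
        rw [this]; simp; positivity
      · have : (inner ℝ (c - c') (u (y j))) ^ 2 = |inner ℝ (c - c') (u (y j))| ^ (2 - p) * |inner ℝ (c - c') (u (y j))| ^ p := by
          rw [← Real.rpow_add hz]; simp
        rw [this]
        have := Real.rpow_le_rpow hz.le (hcc j) (by linarith : 0 ≤ 2 - p)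
        gcongr
    refine hle.trans ?_
    gcongr
    rw [inner_sub_left]
    exact abs_sub_rpow hp1 hp2 _ _
  have b3 : avgP y (fun z => s ^ (2 - p) * (2 * (|inner ℝ c (u z)| ^ p + |inner ℝ c' (u z)| ^ p)))
     = s ^ (2 - p) * (2 * (avgP y (fun z => |inner ℝ c (u z)| ^ p) + avgP y (fun z => |inner ℝ c' (u z)| ^ p))) := by
    simp only [avgP, ← Finset.mul_sum, Finset.sum_add_distrib]
    ring
  rw [b3] at b2
  have b4 : s ^ (2 - p) * (2 * (avgP y (fun z => |inner ℝ c (u z)| ^ p) + avgP y (fun z => |inner ℝ c' (u z)| ^ p)))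
     ≤ s ^ (2 - p) * (2 * (2 * (1 + 1 / Φ 1) + 2 * (1 + 1 / Φ 1))) := by
    gcongr
    · exact key c hc
    · exact key c' hc'
  linarith

/-- second chain -/
def Setup.chain2 (S : Setup μ u K) (h : GoodPhi Φ p q) (δ : ℝ) (hδ1 : δ ≤ 1) {n : ℕ} (hn : 0 < n)
    (y : Fin n → Ω)
    (hy1 : ∀ c ∈ ballPhi μ u Φ, |avgP y (fun z => Φ |inner ℝ c (u z)|) - ∫ z, Φ |inner ℝ c (u z)| ∂μ| ≤ δ / 2)
    (hy2 : ∀ c, ‖c‖ ^ 2 / 2 ≤ avgP y (fun z => (inner ℝ c (u z)) ^ 2)) : ChainData (Fin n) E where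
  F := ballPhi μ u Φ
  φ c j := Φ |inner ℝ c (u (y j))|
  rel k c c' := ∀ j, |inner ℝ (c - c') (u (y j))| ≤ bigM Φ p K / 2 ^ k
  w k := q * Real.sqrt (Φ (bigM Φ p K)) * Real.sqrt ((1 / 2 ^ p) ^ k)
  a k := Real.log 2 + 256 * Real.log (4 * n) * (2 ^ p) ^ k
  c0 := 0
  hw k := by have := h.hq; positivity
  hc0 := by simp [ballPhi, h.zero]
  hφ0 := by simp [h.zero]
  hφn c v := h.nonneg (abs_nonneg _)
  hroot c hc j := by
    rw [sub_zero, pow_zero, div_one]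
    exact (S.ball_bound h hc).1 (y j)
  hlip k c hc c' hc' hr v := by
    have hM := bigM_pos h S.K1
    have hΦM := bigM_phi h S.K1
    have hn1 := h.nonneg (abs_nonneg (inner ℝ c (u (y v))))
    have hn2 := h.nonneg (abs_nonneg (inner ℝ c' (u (y v))))
    have h1 := h.lip_sq ((S.ball_bound h hc).1 (y v)) ((S.ball_bound h hc').1 (y v)) hM
    refine h1.trans (mul_le_mul_of_nonneg_right ?_ (by linarith))
    change q ^ 2 * Φ (bigM Φ p K) / (bigM Φ p K) ^ p * _ ≤ _
    rw [mul_pow, mul_pow, Real.sq_sqrt (by positivity), Real.sq_sqrt (by positivity)]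
    have h3 : |inner ℝ c (u (y v)) - inner ℝ c' (u (y v))| ^ p ≤ bigM Φ p K ^ p * (1 / 2 ^ p) ^ k := by
      have := hr v
      rw [inner_sub_left] at this
      calc _ ≤ (bigM Φ p K / 2 ^ k) ^ p := Real.rpow_le_rpow (abs_nonneg _) this (by linarith [h.hp1])
        _ = _ := by
          rw [Real.div_rpow hM.le (by positivity), div_pow, one_pow, ← Real.rpow_natCast, ← Real.rpow_natCast, ← Real.rpow_mul (by norm_num), ← Real.rpow_mul (by norm_num), mul_comm p]
          ring
    calc _ ≤ q ^ 2 * Φ (bigM Φ p K) / (bigM Φ p K) ^ p * (bigM Φ p K ^ p * (1 / 2 ^ p) ^ k) := by gcongr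
      _ = _ := by
        have : bigM Φ p K ^ p ≠ 0 := (Real.rpow_pos_of_pos hM p).ne'
        field_simp
  hcov k g hg := by
    classical
    have hM := bigM_pos h S.K1
    have hK1 := S.K1
    have h1 := h.pos 1 one_pos
    set s := bigM Φ p K / 2 ^ k with hs
    have hs0 : 0 < s := by positivity
    have hsr : ∀ c c' : E, (∀ j, |inner ℝ (c - c') (u (y j))| ≤ bigM Φ p K / 2 ^ (k + 1)) ↔
      (∀ j, |inner ℝ (c - c') (u (y j))| ≤ s / 2) := by
        intro c c'; rw [hs, pow_succ, ← div_div]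
    obtain ⟨T, t1, t2, t3⟩ := sep_net {f | f ∈ ballPhi μ u Φ ∧ ∀ j, |inner ℝ (f - g) (u (y j))| ≤ s}
      (fun f h => ∀ j, |inner ℝ (f - h) (u (y j))| ≤ s / 2) (fun x => by simp; intro _; positivity)
      (fun x y h j => by rw [← neg_sub, inner_neg_left, abs_neg]; exact h j)
      (Real.exp (Real.log 2 + 256 * Real.log (4 * n) * (2 ^ p) ^ k)) (by
        intro T hTG hTs
        have hd := dual_sudakov hn (fun j => u (y j)) K (by linarith) (fun j => S.hK _)
          (T.image (fun f => f - g)) (16 * (1 + 1 / Φ 1) * s ^ (2 - p)) s hs0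
          (by
            intro f hf
            obtain ⟨f', hf', rfl⟩ := Finset.mem_image.1 hf
            exact S.diff_norm h δ hδ1 hn y hy1 hy2 f' g (hTG _ hf').1 hg s hs0 (hTG _ hf').2)
          (by
            intro f hf f2 hf2 hne
            obtain ⟨f', hf', rfl⟩ := Finset.mem_image.1 hf
            obtain ⟨f2', hf2', rfl⟩ := Finset.mem_image.1 hf2
            have : f' ≠ f2' := fun e => hne (by rw [e])
            have := hTs f' hf' f2' hf2' this
            push Not at this
            simpa using this)
        rw [Finset.card_image_of_injective _ (sub_left_injective)] at hd
        refine hd.trans (le_of_eq ?_)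
        rw [Real.exp_add, Real.exp_log two_pos]
        congr 2
        have e1 : s ^ (2 - p) = s ^ 2 / s ^ p := by
          rw [Real.rpow_sub hs0]; simp
        have e2 : s ^ p = (1 + 1 / Φ 1) * K / (2 ^ p) ^ k := by
          rw [hs, Real.div_rpow hM.le (by positivity), bigM_pow h hK1, ← Real.rpow_natCast, ← Real.rpow_natCast, ← Real.rpow_mul (by norm_num), ← Real.rpow_mul (by norm_num), mul_comm p]
        rw [e1, e2]
        have : (1 + 1 / Φ 1) ≠ 0 := by positivity
        have hK0 : K ≠ 0 := by linarith
        generalize (1 + 1 / Φ 1) = C0 at *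
        field_simp
        ring)
    refine ⟨T, fun f hf => (t1 f hf).1, t2, fun f hf => (t1 f hf).2, fun f hf hr => ?_⟩
    obtain ⟨f', hf', hr'⟩ := t3 f ⟨hf, hr⟩
    exact ⟨f', hf', (hsr _ _).2 hr'⟩

lemma chain2_bd {V : Type*} {n : ℕ} (hn : 0 < n) (D : ChainData V E) (hp1 : 1 ≤ p) (Q : ℝ) (hQ : 0 ≤ Q)
    (hw : ∀ k, D.w k = Q * Real.sqrt ((1 / 2 ^ p) ^ k))
    (ha : ∀ k, D.a k = Real.log 2 + 256 * Real.log (4 * n) * (2 ^ p) ^ k) (j : ℕ) :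
    D.bd j (2 ^ j) ≤ 34 * ((j:ℝ) + 1) * Real.sqrt (Real.log (4 * n)) * Q := by
  set b : ℝ := 2 ^ p with hb
  have hb2 : 2 ≤ b := by
    have := Real.rpow_le_rpow_of_exponent_le one_le_two hp1
    simpa using this
  set l := Real.log (4 * n) with hl
  have hn1 : (1:ℝ) ≤ n := by exact_mod_cast hn
  have hl1 : 1 ≤ l := by
    rw [hl, Real.le_log_iff_exp_le (by positivity)]
    have := Real.exp_one_lt_d9
    linarith
  have hs1 : 1 ≤ Real.sqrt l := Real.one_le_sqrt.2 hl1
  have hbs : ∀ k : ℕ, ∑ i ∈ Finset.range (k + 1), b ^ i ≤ 2 * b ^ k := by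
    intro k
    induction k with
    | zero => simp
    | succ k ih =>
      rw [Finset.sum_range_succ]
      have : b ^ (k + 1) = b ^ k * b := pow_succ _ _
      have : 0 < b ^ k := by positivity
      nlinarith
  have hkb : ∀ k : ℕ, (k:ℝ) + 1 ≤ b ^ k := by
    intro k
    have := one_add_mul_le_pow (a := (1:ℝ)) (by norm_num) k
    calc (k:ℝ) + 1 ≤ (1 + 1) ^ k := by linarith
      _ ≤ b ^ k := by gcongr; linarith
  have h1 : ∀ k, D.u k * D.w k ≤ 33 * Real.sqrt l * Q := by
    intro k
    have hu : D.u k ≤ 33 * Real.sqrt l * Real.sqrt (b ^ k) := by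
      rw [ChainData.u, Real.sqrt_le_left (by positivity), mul_pow, mul_pow, Real.sq_sqrt (by linarith), Real.sq_sqrt (by positivity)]
      simp only [ha, Finset.sum_add_distrib, Finset.sum_const, Finset.card_range, nsmul_eq_mul, ← Finset.mul_sum]
      push_cast
      have a1 := hbs k
      have a2 := hkb k
      have a3 := Real.log_two_lt_d9
      have a4 : 256 * l * ∑ i ∈ Finset.range (k + 1), b ^ i ≤ 256 * l * (2 * b ^ k) := by gcongr
      have hk0 : (0:ℝ) ≤ k := by positivity
      have a5 : ((k:ℝ) + 1) * Real.log 2 ≤ b ^ k := by nlinarith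
      have a6 : b ^ k ≤ l * b ^ k := by nlinarith
      nlinarith
    rw [hw]
    calc D.u k * (Q * Real.sqrt ((1 / b) ^ k)) ≤ 33 * Real.sqrt l * Real.sqrt (b ^ k) * (Q * Real.sqrt ((1 / b) ^ k)) := by gcongr
      _ = 33 * Real.sqrt l * Q * (Real.sqrt (b ^ k) * Real.sqrt ((1 / b) ^ k)) := by ring
      _ = _ := by
        rw [← Real.sqrt_mul (by positivity), ← mul_pow, mul_one_div_cancel (by positivity)]; simp
  have h2 : Real.sqrt ((2 ^ j : ℕ) : ℝ) * D.w j ≤ Q := by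
    rw [hw]
    have : Real.sqrt ((2 ^ j : ℕ) : ℝ) * Real.sqrt ((1 / b) ^ j) ≤ 1 := by
      rw [← Real.sqrt_mul (by positivity)]; push_cast; rw [← mul_pow, Real.sqrt_le_left zero_le_one, one_pow]
      refine pow_le_one₀ (by positivity) ?_
      rw [mul_one_div, div_le_one (by positivity)]; exact hb2
    calc _ = Q * (Real.sqrt ((2 ^ j : ℕ) : ℝ) * Real.sqrt ((1 / b) ^ j)) := by ring
      _ ≤ Q * 1 := by gcongr
      _ = Q := mul_one _
  rw [ChainData.bd]
  have h3 := Finset.sum_le_sum (s := Finset.range j) (fun k _ => h1 k)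
  simp at h3
  have h4 : Q ≤ Real.sqrt l * Q := by nlinarith
  have h5 : 0 ≤ (j:ℝ) * (Real.sqrt l * Q) := by positivity
  push_cast at h2 ⊢
  nlinarith

lemma Setup.stage_two (S : Setup μ u K) (h : GoodPhi Φ p q) (δ : ℝ) (hδ1 : δ ≤ 1) (j1 : ℕ)
    (y : Fin (2 ^ j1) → Ω)
    (hy1 : ∀ c ∈ ballPhi μ u Φ, |avgP y (fun z => Φ |inner ℝ c (u z)|) - ∫ z, Φ |inner ℝ c (u z)| ∂μ| ≤ δ / 2)
    (hy2 : ∀ c, ‖c‖ ^ 2 / 2 ≤ avgP y (fun z => (inner ℝ c (u z)) ^ 2)) (J : ℕ) (hJ1 : J ≤ j1)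
    (hJ : 7 * (34 * ((j1:ℝ) + 1) * Real.sqrt (Real.log (4 * (2 ^ j1 : ℕ))) * (q * Real.sqrt (Φ (bigM Φ p K)))) / Real.sqrt (2 ^ J) ≤ δ / 2) :
    ∃ z : Fin (2 ^ J) → Ω, ∀ c ∈ ballPhi μ u Φ,
      |avgP z (fun w => Φ |inner ℝ c (u w)|) - ∫ w, Φ |inner ℝ c (u w)| ∂μ| ≤ δ := by
  have hn : 0 < 2 ^ j1 := by positivity
  have hq := h.hq
  let D := S.chain2 h δ hδ1 hn y hy1 hy2
  have hb : ∀ j < j1, ∃ L, D.bd L (2 ^ j) ≤ 34 * ((j1:ℝ) + 1) * Real.sqrt (Real.log (4 * (2 ^ j1 : ℕ))) * (q * Real.sqrt (Φ (bigM Φ p K))) := by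
    intro j hj
    refine ⟨j, (chain2_bd hn D h.hp1 _ (by positivity) (fun _ => rfl) (fun _ => rfl) j).trans ?_⟩
    have : (j:ℝ) ≤ j1 := by exact_mod_cast hj.le
    gcongr
  obtain ⟨z, hz, _⟩ := halve_iter D D j1 id (fun c => ∫ w, Φ |inner ℝ c (u w)| ∂μ) (fun c => ∫ w, Φ |inner ℝ c (u w)| ∂μ) (δ / 2)
    _ (by positivity) (fun c hc => hc) (fun c hc => hc) hy1 hy1 hb hb J hJ1 (by linarith)
  exact ⟨fun i => y (z i), fun c hc => (hz c hc).trans (by linarith)⟩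
end
end

noncomputable section
set_option linter.unusedSectionVars false

lemma pow_two_near (X : ℝ) (hX : 1 ≤ X) : ∃ j : ℕ, X ≤ 2 ^ j ∧ (2:ℝ) ^ j ≤ 2 * X := by
  obtain ⟨n, h1, h2⟩ := exists_nat_pow_near hX one_lt_two
  refine ⟨n + 1, h2.le, ?_⟩
  rw [pow_succ]; linarith

lemma div_sqrt_le {a t X : ℝ} (ht : 0 < t) (h : a ^ 2 / t ^ 2 ≤ X) (hX : 0 < X) : a / Real.sqrt X ≤ t := by
  rw [div_le_iff₀ (Real.sqrt_pos.2 hX)]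
  refine (le_abs_self a).trans (abs_le_of_sq_le_sq ?_ (by positivity))
  rw [mul_pow, Real.sq_sqrt hX.le]
  rw [div_le_iff₀ (by positivity)] at h
  linarith

lemma numerics {Φ : ℝ → ℝ} {p q : ℝ} (h : GoodPhi Φ p q) (δ : ℝ) (hδ : 0 < δ) (hδ1 : δ ≤ 1) :
    ∃ C : ℝ, 0 < C ∧ ∀ (K N : ℝ), 1 ≤ N → N ≤ K → ∃ j1 J : ℕ,
      7 * (43 * Real.sqrt N * (2 * q * Real.sqrt (Φ (bigM Φ p K) * K))) / Real.sqrt (2 ^ j1) ≤ δ / 4 ∧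
      7 * (34 * ((j1:ℝ) + 1) * Real.sqrt (Real.log (4 * (2 ^ j1 : ℕ))) * (q * Real.sqrt (Φ (bigM Φ p K)))) / Real.sqrt (2 ^ J) ≤ δ / 2 ∧
      (2:ℝ) ^ J ≤ C * Φ (K ^ (1 / p)) * (Real.logb 2 (2 * K)) ^ 3 := by
  have hp1 := h.hp1
  have hq := h.hq
  have hΦ1 := h.pos 1 one_pos
  set C0 := 1 + 1 / Φ 1 with hC0
  have hC01 : 1 ≤ C0 := by
    have : 0 < 1 / Φ 1 := by positivity
    linarith
  set c1 := (C0 ^ (1 / p)) ^ q with hc1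
  have hc11 : 1 ≤ c1 := Real.one_le_rpow (Real.one_le_rpow hC01 (by positivity)) (by linarith)
  set c2 := 2 * ((2408 * q / δ) ^ 2 * (c1 * Φ 1)) with hc2
  have hc20 : 0 < c2 := by positivity
  set c3 := |Real.logb 2 c2| + (q + 2) with hc3
  have hc30 : 0 < c3 := by positivity
  refine ⟨2 * ((476 * q / δ) ^ 2 * ((c3 + 2) ^ 3 * c1)), by positivity, fun K N hN hNK => ?_⟩
  have hK1 : 1 ≤ K := hN.trans hNK
  have hP1 := bigM_phi h hK1
  have hPG : Φ (bigM Φ p K) ≤ c1 * Φ (K ^ (1 / p)) := by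
    have hl : 1 ≤ C0 ^ (1 / p) := Real.one_le_rpow hC01 (by positivity)
    have := h.scale_dec (bigM_pos h hK1).le hl
    have e : bigM Φ p K / C0 ^ (1 / p) = K ^ (1 / p) := by
      rw [bigM, ← hC0, Real.mul_rpow (by positivity) (by linarith)]
      have : C0 ^ (1 / p) ≠ 0 := by positivity
      rw [mul_div_assoc, mul_comm, div_mul_cancel₀ _ this]
    rwa [e] at this
  have hGK : Φ (K ^ (1 / p)) ≤ K ^ q * Φ 1 := by
    have hl : 1 ≤ K ^ (1 / p) := Real.one_le_rpow hK1 (by positivity)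
    have := h.scale_dec (by linarith : 0 ≤ K ^ (1 / p)) hl
    rw [div_self (by positivity)] at this
    refine this.trans ?_
    gcongr
    have := Real.rpow_le_rpow_of_exponent_le hK1 ((div_le_one (by linarith)).2 hp1)
    simpa using this
  set P := Φ (bigM Φ p K) with hP
  set G := Φ (K ^ (1 / p)) with hG
  set Lg := Real.logb 2 (2 * K) with hLg
  have hLg1 : Lg = 1 + Real.logb 2 K := by
    rw [hLg, Real.logb_mul (by norm_num) (by positivity)]; simp
  have hlK : 0 ≤ Real.logb 2 K := Real.logb_nonneg one_lt_two hK1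
  have hLg0 : 0 ≤ Lg := by linarith
  have hqd : 1 ≤ q / δ := by rw [le_div_iff₀ hδ]; linarith
  obtain ⟨j1, hj1, hj1'⟩ := pow_two_near ((2408 * q / δ) ^ 2 * (K ^ 2 * P)) (by
    have a1 : 1 ≤ (2408 * q / δ) ^ 2 := one_le_pow₀ (by rw [mul_div_assoc]; linarith)
    have a2 : 1 ≤ K ^ 2 := one_le_pow₀ hK1
    exact one_le_mul_of_one_le_of_one_le a1 (one_le_mul_of_one_le_of_one_le a2 hP1))
  have hj1L : (j1:ℝ) ≤ c3 * Lg := by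
    have b1 : (2:ℝ) ^ j1 ≤ c2 * K ^ (q + 2) := by
      refine hj1'.trans ?_
      have e : K ^ (q + 2) = K ^ q * K ^ 2 := by
        rw [Real.rpow_add (by linarith)]; simp
      rw [e, hc2]
      have : P ≤ c1 * (K ^ q * Φ 1) := hPG.trans (by gcongr)
      calc 2 * ((2408 * q / δ) ^ 2 * (K ^ 2 * P)) ≤ 2 * ((2408 * q / δ) ^ 2 * (K ^ 2 * (c1 * (K ^ q * Φ 1)))) := by gcongr
        _ = _ := by ring
    have b2 : (j1:ℝ) ≤ Real.logb 2 (c2 * K ^ (q + 2)) := by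
      rw [Real.le_logb_iff_rpow_le one_lt_two (by positivity), Real.rpow_natCast]
      exact b1
    rw [Real.logb_mul (by positivity) (by positivity), Real.logb_rpow_eq_mul_logb_of_pos (by linarith)] at b2
    have b3 := le_abs_self (Real.logb 2 c2)
    have b4 := abs_nonneg (Real.logb 2 c2)
    rw [hLg1, hc3]
    nlinarith
  obtain ⟨J, hJ, hJ'⟩ := pow_two_near ((476 * q / δ) ^ 2 * (((j1:ℝ) + 2) ^ 3 * P)) (by
    have a1 : 1 ≤ (476 * q / δ) ^ 2 := one_le_pow₀ (by rw [mul_div_assoc]; linarith)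
    have a0 : (0:ℝ) ≤ j1 := by positivity
    have a2 : 1 ≤ ((j1:ℝ) + 2) ^ 3 := one_le_pow₀ (by linarith)
    exact one_le_mul_of_one_le_of_one_le a1 (one_le_mul_of_one_le_of_one_le a2 hP1))
  refine ⟨j1, J, ?_, ?_, ?_⟩
  · refine div_sqrt_le (by positivity) (le_trans ?_ hj1) (by positivity)
    have e : (7 * (43 * Real.sqrt N * (2 * q * Real.sqrt (P * K)))) ^ 2 = (602 * q) ^ 2 * (Real.sqrt N ^ 2 * Real.sqrt (P * K) ^ 2) := by ring
    rw [e, Real.sq_sqrt (by linarith), Real.sq_sqrt (by positivity)]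
    calc _ = (2408 * q / δ) ^ 2 * ((N * K) * P) := by field_simp; ring
      _ ≤ _ := by
        gcongr
        nlinarith
  · refine div_sqrt_le (by positivity) (le_trans ?_ hJ) (by positivity)
    have hl : Real.log (4 * (2 ^ j1 : ℕ)) ≤ (j1:ℝ) + 2 := by
      have e4 : (4 * (2 ^ j1 : ℕ) : ℝ) = 2 ^ (j1 + 2) := by push_cast; ring
      rw [e4, Real.log_pow]
      push_cast
      have := Real.log_two_lt_d9
      have : (0:ℝ) ≤ j1 := by positivity
      nlinarith
    have hl0 : 0 ≤ Real.log (4 * (2 ^ j1 : ℕ)) := by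
      apply Real.log_nonneg
      have : (1:ℝ) ≤ (2 ^ j1 : ℕ) := by exact_mod_cast Nat.one_le_two_pow
      linarith
    have e : (7 * (34 * ((j1:ℝ) + 1) * Real.sqrt (Real.log (4 * (2 ^ j1 : ℕ))) * (q * Real.sqrt P))) ^ 2 = (238 * q) ^ 2 * (((j1:ℝ) + 1) ^ 2 * Real.sqrt (Real.log (4 * (2 ^ j1 : ℕ))) ^ 2 * Real.sqrt P ^ 2) := by ring
    rw [e, Real.sq_sqrt hl0, Real.sq_sqrt (by positivity)]
    calc _ = (476 * q / δ) ^ 2 * ((((j1:ℝ) + 1) ^ 2 * Real.log (4 * (2 ^ j1 : ℕ))) * P) := by field_simp; ring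
      _ ≤ (476 * q / δ) ^ 2 * ((((j1:ℝ) + 2) ^ 2 * ((j1:ℝ) + 2)) * P) := by
        gcongr
        linarith
      _ = _ := by ring
  · refine hJ'.trans ?_
    have : (j1:ℝ) + 2 ≤ (c3 + 2) * Lg := by nlinarith
    calc 2 * ((476 * q / δ) ^ 2 * (((j1:ℝ) + 2) ^ 3 * P)) ≤ 2 * ((476 * q / δ) ^ 2 * (((c3 + 2) * Lg) ^ 3 * (c1 * G))) := by gcongr
      _ = _ := by ring

lemma combine {Φ : ℝ → ℝ} {p q : ℝ} (h : GoodPhi Φ p q) (δ : ℝ) (hδ : 0 < δ) (hδ1 : δ ≤ 1) :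
    ∃ C : ℝ, 0 < C ∧ ∀ {Ω E : Type} [TopologicalSpace Ω] [CompactSpace Ω] [MeasurableSpace Ω] [BorelSpace Ω]
    [NormedAddCommGroup E] [InnerProductSpace ℝ E] [FiniteDimensional ℝ E] [MeasurableSpace E] [BorelSpace E]
    {μ : Measure Ω} [IsProbabilityMeasure μ]
    {u : Ω → E} {K : ℝ} (_ : Setup μ u K),
    ∃ J : ℕ, (2:ℝ) ^ J ≤ C * Φ (K ^ (1 / p)) * (Real.logb 2 (2 * K)) ^ 3 ∧
    ∃ z : Fin (2 ^ J) → Ω, ∀ c ∈ ballPhi μ u Φ,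
      |avgP z (fun w => Φ |inner ℝ c (u w)|) - ∫ w, Φ |inner ℝ c (u w)| ∂μ| ≤ δ := by
  obtain ⟨C, hC, hnum⟩ := numerics h δ hδ hδ1
  refine ⟨C, hC, ?_⟩
  intro Ω E _ _ _ _ _ _ _ _ _ μ _ u K S
  obtain ⟨j1, J, h1, h2, h3⟩ := hnum K (Module.finrank ℝ E) (by exact_mod_cast S.hN) S.hNK
  obtain ⟨y, hy1, hy2⟩ := S.stage_one h δ hδ hδ1 j1 h1
  rcases le_or_gt J j1 with hJ | hJ
  · exact ⟨J, h3, S.stage_two h δ hδ1 j1 y hy1 hy2 J hJ h2⟩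
  · refine ⟨j1, (pow_le_pow_right₀ one_le_two hJ.le).trans h3, y, fun c hc => (hy1 c hc).trans (by linarith)⟩
end

noncomputable section

lemma lux_compare (I D : ℝ → ℝ) (q δ : ℝ) (hq : 1 ≤ q) (hδ : 0 < δ)
    (hI0 : ∀ l, 0 < l → 0 ≤ I l) (hD0 : ∀ l, 0 < l → 0 ≤ D l)
    (hI : ∀ a l, 0 < a → 1 ≤ l → I (a * l) ≤ I a / l)
    (hD : ∀ a l, 0 < a → 1 ≤ l → D (a * l) ≤ D a / l)
    (hI' : ∀ a l, 0 < a → 1 ≤ l → I a ≤ l ^ q * I (a * l))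
    (hID : ∀ a, 0 < a → I a ≤ 1 → |D a - I a| ≤ δ)
    (r : ℝ) (hr : 0 < r) (hrI : ∀ a, 0 < a → I a ≤ 1 → r ≤ a) :
    (1 - δ) * sInf {a | 0 < a ∧ I a ≤ 1} ≤ sInf {a | 0 < a ∧ D a ≤ 1} ∧
    sInf {a | 0 < a ∧ D a ≤ 1} ≤ (1 + δ) * sInf {a | 0 < a ∧ I a ≤ 1} := by
  have hne : ∀ G : ℝ → ℝ, (∀ l, 0 < l → 0 ≤ G l) → (∀ a l, 0 < a → 1 ≤ l → G (a * l) ≤ G a / l) →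
      {a | 0 < a ∧ G a ≤ 1}.Nonempty := by
    intro G h0 hG
    have h1 := h0 1 one_pos
    refine ⟨1 * (1 + G 1), by positivity, (hG 1 (1 + G 1) one_pos (by linarith)).trans ?_⟩
    rw [div_le_one (by linarith)]; linarith
  set A := {a | 0 < a ∧ I a ≤ 1} with hA
  set B := {a | 0 < a ∧ D a ≤ 1} with hB
  have hAne : A.Nonempty := hne I hI0 hI
  have hBne : B.Nonempty := hne D hD0 hD
  have hAb : BddBelow A := ⟨0, fun a ha => ha.1.le⟩
  have hBb : BddBelow B := ⟨0, fun a ha => ha.1.le⟩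
  have hlam : r ≤ sInf A := le_csInf hAne fun a ha => hrI a ha.1 ha.2
  set lam := sInf A with hl
  have hlam0 : 0 < lam := hr.trans_le hlam
  constructor
  · refine le_csInf hBne fun ν hν => ?_
    obtain ⟨hν0, hν1⟩ := hν
    by_contra hcon
    push Not at hcon
    have hνl : ν < lam := hcon.trans (by nlinarith)
    have key : ∀ η : ℝ, η ∈ Set.Ioo (0:ℝ) 1 → ((1 - η) / (1 + η)) ^ q - δ ≤ ν / (lam * (1 + η)) := by
      intro η hη
      obtain ⟨hη0, hη1⟩ := hη
      set l' := lam * (1 + η) with hl'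
      have hll : lam < l' := by rw [hl']; nlinarith
      obtain ⟨a, ha, hal⟩ := exists_lt_of_csInf_lt hAne hll
      have hA' : I l' ≤ 1 := by
        have := hI a (l' / a) ha.1 ((one_le_div ha.1).2 hal.le)
        rw [mul_div_cancel₀ _ ha.1.ne'] at this
        refine this.trans ?_
        rw [div_le_one (by have := ha.1; positivity)]
        exact ha.2.trans ((one_le_div ha.1).2 hal.le)
      have hl'0 : 0 < l' := hlam0.trans hll
      have h1 := (abs_le.1 (hID l' hl'0 hA')).1
      have h2 : D l' ≤ ν / l' := by
        have hh : 1 ≤ l' / ν := (one_le_div hν0).2 (hνl.trans hll).le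
        have := hD ν (l' / ν) hν0 hh
        rw [mul_div_cancel₀ _ hν0.ne'] at this
        refine this.trans ?_
        calc D ν / (l' / ν) ≤ 1 / (l' / ν) := by gcongr
          _ = _ := by rw [one_div_div]
      have h3 : ((1 - η) / (1 + η)) ^ q ≤ I l' := by
        set l'' := lam * (1 - η) with hl''
        have hl''0 : 0 < l'' := by rw [hl'']; apply mul_pos hlam0; linarith
        have h4 : 1 ≤ I l'' := by
          by_contra hc
          push Not at hc
          have : lam ≤ l'' := csInf_le hAb ⟨hl''0, hc.le⟩
          rw [hl''] at this
          nlinarith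
        have hr1 : (1 - η) / (1 + η) = (l' / l'')⁻¹ := by
          rw [inv_div, hl', hl'', mul_div_mul_left _ _ hlam0.ne']
        have hh : 1 ≤ l' / l'' := (one_le_div hl''0).2 (by rw [hl', hl'']; nlinarith)
        have h5 := hI' l'' (l' / l'') hl''0 hh
        rw [mul_div_cancel₀ _ hl''0.ne'] at h5
        rw [hr1, Real.inv_rpow (by positivity), inv_le_iff_one_le_mul₀ (by positivity)]
        linarith
      linarith
    have t1 : Filter.Tendsto (fun η : ℝ => ((1 - η) / (1 + η)) ^ q - δ) (nhdsWithin 0 (Set.Ioi 0)) (nhds (1 - δ)) := by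
      have : ContinuousAt (fun η : ℝ => ((1 - η) / (1 + η)) ^ q - δ) 0 := by
        refine ContinuousAt.sub (ContinuousAt.rpow_const (ContinuousAt.div (by fun_prop) (by fun_prop) (by norm_num)) (Or.inl (by norm_num))) continuousAt_const
      have := this.tendsto
      simp at this
      exact this.mono_left nhdsWithin_le_nhds
    have t2 : Filter.Tendsto (fun η : ℝ => ν / (lam * (1 + η))) (nhdsWithin 0 (Set.Ioi 0)) (nhds (ν / lam)) := by
      have : ContinuousAt (fun η : ℝ => ν / (lam * (1 + η))) 0 := by
        refine ContinuousAt.div (by fun_prop) (by fun_prop) (by simpa using hlam0.ne')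
      have := this.tendsto
      simp at this
      exact this.mono_left nhdsWithin_le_nhds
    have := le_of_tendsto_of_tendsto t1 t2 (by
      filter_upwards [Ioo_mem_nhdsGT (zero_lt_one' ℝ)] with η hη
      exact key η hη)
    rw [le_div_iff₀ hlam0] at this
    linarith
  · have h1 : ∀ a ∈ A, sInf B / (1 + δ) ≤ a := by
      intro a ha
      have h2 := (abs_le.1 (hID a ha.1 ha.2)).2
      have h3 := hD a (1 + δ) ha.1 (by linarith)
      have h4 : D (a * (1 + δ)) ≤ 1 := h3.trans (by rw [div_le_one (by linarith)]; linarith [ha.2])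
      have : sInf B ≤ a * (1 + δ) := csInf_le hBb ⟨by have := ha.1; positivity, h4⟩
      rw [div_le_iff₀ (by linarith)]; exact this
    have := le_csInf hAne h1
    rw [div_le_iff₀ (by linarith)] at this
    linarith

lemma exists_onb {V : Type*} [AddCommGroup V] [Module ℝ V] [FiniteDimensional ℝ V]
    (B : V → V → ℝ) (hsymm : ∀ x y, B x y = B y x) (hadd : ∀ x y z, B (x + y) z = B x z + B y z)
    (hsmul : ∀ (r : ℝ) x y, B (r • x) y = r * B x y) (hnn : ∀ x, 0 ≤ B x x) (hpos : ∀ x, B x x = 0 → x = 0) :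
    ∃ L : EuclideanSpace ℝ (Fin (Module.finrank ℝ V)) ≃ₗ[ℝ] V, ∀ c, B (L c) (L c) = ‖c‖ ^ 2 := by
  let core : InnerProductSpace.Core ℝ V :=
    { inner := B
      conj_inner_symm := fun x y => by simpa using (hsymm y x)
      re_inner_nonneg := fun x => by simpa using hnn x
      add_left := hadd
      smul_left := fun x y r => by simpa using hsmul r x y
      definite := hpos }
  letI : NormedAddCommGroup V := core.toNormedAddCommGroup
  letI : InnerProductSpace ℝ V := InnerProductSpace.ofCore core.toCore
  let b := stdOrthonormalBasis ℝ V
  refine ⟨b.repr.symm.toLinearEquiv, fun c => ?_⟩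
  have : B (b.repr.symm c) (b.repr.symm c) = ‖b.repr.symm c‖ ^ 2 := by
    rw [← real_inner_self_eq_norm_sq]; rfl
  rw [LinearIsometryEquiv.norm_map] at this
  exact this
end

noncomputable section

lemma goodPhi_of {Φ : ℝ → ℝ} {p q : ℝ} (hp : 1 ≤ p) (hpre : IsPhiPrefun Φ)
    (hinc : IncP Φ p) (hpq : p ≤ q) (hdec : DecQ Φ q) : GoodPhi Φ (min p 2) q := by
  have hpos : ∀ t, 0 < t → 0 < Φ t := by
    intro t ht
    obtain ⟨T, hT1, hT2⟩ := ((hpre.tendsto_atTop.eventually_gt_atTop 0).and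
      (Filter.eventually_gt_atTop t)).exists
    have h1 := hdec t T ht hT2
    have hT0 : 0 < T := ht.trans hT2
    have h2 : 0 < Φ T / T ^ q := by positivity
    have h3 := h2.trans_le h1
    have h4 : 0 < t ^ q := by positivity
    exact (div_pos_iff_of_pos_right h4).1 h3
  refine ⟨le_min hp (by norm_num), min_le_right _ _, hp.trans hpq, hpre.map_zero, hpos, ?_, ?_⟩
  · intro s t hs hst
    have ht := hs.trans_le hst
    rcases hst.eq_or_lt with rfl | hlt
    · rw [div_self hs.ne', Real.one_rpow, one_mul]
    · have h1 := hinc s t hs hlt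
      have hsp : 0 < s ^ p := by positivity
      rw [div_le_iff₀ hsp] at h1
      have h2 : Φ t / t ^ p * s ^ p = (s / t) ^ p * Φ t := by
        rw [Real.div_rpow hs.le ht.le]; ring
      rw [h2] at h1
      refine h1.trans ?_
      gcongr ?_ * Φ t
      · exact (hpos t ht).le
      · exact Real.rpow_le_rpow_of_exponent_ge (by positivity) ((div_le_one ht).2 hst) (min_le_left _ _)
  · intro s t hs hst
    have ht := hs.trans_le hst
    rcases hst.eq_or_lt with rfl | hlt
    · rw [div_self hs.ne', Real.one_rpow, one_mul]
    · have h1 := hdec s t hs hlt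
      have hsp : 0 < s ^ q := by positivity
      rw [le_div_iff₀ hsp] at h1
      have h2 : Φ t / t ^ q * s ^ q = (s / t) ^ q * Φ t := by
        rw [Real.div_rpow hs.le ht.le]; ring
      rwa [h2] at h1

lemma abs_le_supNorm {Ω : Type*} [TopologicalSpace Ω] [CompactSpace Ω] {f : Ω → ℝ} (hf : Continuous f) (y : Ω) :
    |f y| ≤ supNorm f := by
  unfold supNorm
  exact le_ciSup (f := fun x => |f x|) (isCompact_range hf.abs).bddAbove y

lemma coords {Ω : Type} [TopologicalSpace Ω] [CompactSpace Ω] [MeasurableSpace Ω] [BorelSpace Ω]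
    (μ : Measure Ω) [IsProbabilityMeasure μ] (B : ℝ) (hB : 1 ≤ B) (N : ℕ) (hN : 1 ≤ N)
    (X : Submodule ℝ (Ω → ℝ)) (hX : ∀ f ∈ X, Continuous f) (hfr : Module.finrank ℝ X = N)
    (hs : ∀ f ∈ X, supNorm f ≤ Real.sqrt (B * N) * Real.sqrt (∫ y, (f y) ^ 2 ∂μ)) :
    ∃ u : Ω → EuclideanSpace ℝ (Fin N), Setup μ u (B * N) ∧
      ∀ f ∈ X, ∃ c, ∀ y, f y = inner ℝ c (u y) := by
  haveI : FiniteDimensional ℝ X := Module.finite_of_finrank_pos (by omega)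
  have hIsq : ∀ f g : X, Integrable (fun y => (f : Ω → ℝ) y * (g : Ω → ℝ) y) μ := fun f g =>
    cont_int μ ((hX f f.2).mul (hX g g.2))
  obtain ⟨L, hL⟩ := exists_onb (V := X) (fun f g => ∫ y, (f : Ω → ℝ) y * (g : Ω → ℝ) y ∂μ)
    (fun f g => by simp only [mul_comm])
    (fun f g k => by
      rw [← integral_add (hIsq _ _) (hIsq _ _)]
      congr 1; ext y; simp [add_mul])
    (fun r f g => by
      rw [← integral_const_mul]
      congr 1; ext y; simp [mul_assoc])
    (fun f => integral_nonneg fun y => mul_self_nonneg _)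
    (fun f hf => by
      have h1 := hs f f.2
      have h2 : ∫ y, ((f : Ω → ℝ) y) ^ 2 ∂μ = 0 := by
        rw [← hf]; congr 1; ext y; ring
      rw [h2, Real.sqrt_zero, mul_zero] at h1
      ext y
      have := (abs_le_supNorm (hX f f.2) y).trans h1
      simpa using abs_nonpos_iff.1 this)
  have hL' : ∃ L : EuclideanSpace ℝ (Fin N) ≃ₗ[ℝ] X,
      ∀ c, ∫ y, ((L c : X) : Ω → ℝ) y * ((L c : X) : Ω → ℝ) y ∂μ = ‖c‖ ^ 2 := by
    subst hfr; exact ⟨L, hL⟩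
  clear hL L
  obtain ⟨L, hL⟩ := hL'
  set K : ℝ := B * N with hK
  have hN1 : (1:ℝ) ≤ N := by exact_mod_cast hN
  have hNK : (N:ℝ) ≤ K := by rw [hK]; nlinarith
  let u : Ω → EuclideanSpace ℝ (Fin N) := fun y =>
    WithLp.toLp 2 (fun i => ((L (EuclideanSpace.single i 1) : X) : Ω → ℝ) y)
  have hin : ∀ c y, inner ℝ c (u y) = ((L c : X) : Ω → ℝ) y := by
    intro c y
    have hc : c = ∑ i, c i • EuclideanSpace.single i (1:ℝ) := by
      ext j
      simp [Finset.sum_apply, Pi.single_apply]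
    conv_rhs => rw [hc]
    rw [map_sum]
    simp only [map_smul]
    rw [PiLp.inner_apply]
    simp [u, Finset.sum_apply, mul_comm]
  have hsq : ∀ c, ∫ y, (((L c : X) : Ω → ℝ) y) ^ 2 ∂μ = ‖c‖ ^ 2 := by
    intro c
    rw [← hL c]; congr 1; ext y; ring
  refine ⟨u, ⟨?_, ?_, ?_, ?_, ?_⟩, ?_⟩
  · refine (PiLp.continuous_toLp 2 _).comp (continuous_pi fun i => hX _ (L _).2)
  · intro c
    simp only [hin]; exact hsq c
  · intro y
    have h1 := abs_le_supNorm (hX _ (L (u y)).2) y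
    rw [← hin, real_inner_self_eq_norm_sq] at h1
    have h2 := h1.trans (hs _ (L (u y)).2)
    rw [hsq, Real.sqrt_sq (norm_nonneg _), abs_of_nonneg (by positivity)] at h2
    rcases (norm_nonneg (u y)).eq_or_lt with h0 | h0
    · rw [← h0]; linarith
    · have h3 : ‖u y‖ ≤ Real.sqrt K := by
        rw [pow_two] at h2; exact le_of_mul_le_mul_right h2 h0
      have := Real.sq_sqrt (show (0:ℝ) ≤ K by linarith)
      have h4 := pow_le_pow_left₀ h0.le h3 2
      linarith
  · simpa using hN
  · simpa using hNK
  · intro f hf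
    refine ⟨L.symm ⟨f, hf⟩, fun y => ?_⟩
    rw [hin]; simp

lemma finish_one {Ω E : Type} [TopologicalSpace Ω] [CompactSpace Ω] [MeasurableSpace Ω] [BorelSpace Ω]
    [NormedAddCommGroup E] [InnerProductSpace ℝ E] [FiniteDimensional ℝ E] [MeasurableSpace E] [BorelSpace E]
    {μ : Measure Ω} [IsProbabilityMeasure μ] {Φ : ℝ → ℝ} {p q : ℝ} (h : GoodPhi Φ p q)
    {u : Ω → E} {K : ℝ} (S : Setup μ u K) (δ : ℝ) (hδ : 0 < δ) (m : ℕ) (z : Fin m → Ω)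
    (hz : ∀ c ∈ ballPhi μ u Φ,
      |avgP z (fun w => Φ |inner ℝ c (u w)|) - ∫ w, Φ |inner ℝ c (u w)| ∂μ| ≤ δ)
    (f : Ω → ℝ) (c : E) (hf : ∀ y, f y = inner ℝ c (u y)) :
    (1 - δ) * luxNorm μ Φ f ≤ discLuxNorm Φ z f ∧
      discLuxNorm Φ z f ≤ (1 + δ) * luxNorm μ Φ f := by
  have hfc : Continuous f := by
    have : f = fun y => inner ℝ c (u y) := funext hf
    rw [this]; exact S.cont_in c
  by_cases h0 : ∀ y, f y = 0
  · have e1 : luxNorm μ Φ f = 0 := by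
      unfold luxNorm
      have : {lam : ℝ | 0 < lam ∧ ∫ x, Φ (|f x| / lam) ∂μ ≤ 1} = Set.Ioi 0 := by
        ext l; simp [h0, h.zero]
      rw [this, csInf_Ioi]
    have e2 : discLuxNorm Φ z f = 0 := by
      unfold discLuxNorm
      have : {lam : ℝ | 0 < lam ∧ (∑ j, Φ (|f (z j)| / lam)) / (m : ℝ) ≤ 1} = Set.Ioi 0 := by
        ext l; simp [h0, h.zero]
      rw [this, csInf_Ioi]
    rw [e1, e2]; simp
  push Not at h0
  obtain ⟨y0, hy0⟩ := h0
  have hci : ∀ a, 0 < a → Integrable (fun x => Φ (|f x| / a)) μ := by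
    intro a ha
    apply cont_int
    have : (fun x => Φ (|f x| / a)) = fun x => Φ |f x / a| := by
      ext x; rw [abs_div, abs_of_pos ha]
    rw [this]
    exact h.cont.comp (hfc.div_const a)
  have hsc : ∀ a, 0 < a → ∀ y, |inner ℝ (a⁻¹ • c) (u y)| = |f y| / a := by
    intro a ha y
    rw [real_inner_smul_left, ← hf, abs_mul, abs_of_pos (inv_pos.2 ha)]
    ring
  have hball : ∀ a, 0 < a → ∫ x, Φ (|f x| / a) ∂μ ≤ 1 → a⁻¹ • c ∈ ballPhi μ u Φ := by
    intro a ha h1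
    show ∫ y, Φ |inner ℝ (a⁻¹ • c) (u y)| ∂μ ≤ 1
    simp only [hsc a ha]; exact h1
  have hM := bigM_pos (K := K) h S.K1
  refine lux_compare (fun a => ∫ x, Φ (|f x| / a) ∂μ) (fun a => (∑ j, Φ (|f (z j)| / a)) / (m : ℝ)) q δ h.hq hδ
    ?_ ?_ ?_ ?_ ?_ ?_ (|f y0| / bigM Φ p K) (div_pos (abs_pos.2 hy0) hM) ?_
  · intro l hl
    exact integral_nonneg fun y => h.nonneg (by positivity)
  · intro l hl
    exact div_nonneg (Finset.sum_nonneg fun y _ => h.nonneg (by positivity)) (by positivity)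
  · intro a l ha hl
    rw [← integral_div]
    refine integral_mono (hci _ (by positivity)) ((hci a ha).div_const l) fun y => ?_
    simp only
    rw [← div_div]
    exact h.scale_inc (by positivity) hl
  · intro a l ha hl
    have h1 : ∑ j, Φ (|f (z j)| / (a * l)) ≤ (∑ j, Φ (|f (z j)| / a)) / l := by
      rw [Finset.sum_div]
      refine Finset.sum_le_sum fun j _ => ?_
      rw [← div_div]
      exact h.scale_inc (by positivity) hl
    have h2 := div_le_div_of_nonneg_right h1 (Nat.cast_nonneg m : (0:ℝ) ≤ m)
    rwa [div_right_comm] at h2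
  · intro a l ha hl
    rw [← integral_const_mul]
    refine integral_mono (hci a ha) ((hci _ (by positivity)).const_mul _) fun y => ?_
    simp only
    rw [← div_div]
    exact h.scale_dec (by positivity) hl
  · intro a ha h1
    have := hz _ (hball a ha h1)
    simp only [hsc a ha] at this
    exact this
  · intro a ha h1
    have := (S.ball_bound h (hball a ha h1)).1 y0
    rw [hsc a ha, div_le_iff₀ ha] at this
    rw [div_le_iff₀ hM, mul_comm]
    exact this

end

/-- Theorem 1.1. Let `p ∈ [1,∞)`, `ε ∈ (0,1)`. Let `Φ` be a Φ-function with
`t ↦ Φ(t)t^{-p}` increasing on `(0,∞)` and `t ↦ Φ(t)t^{-q}` decreasing on `(0,∞)` for some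
`q ∈ [p,∞)`. There is `C = C_{Φ,ε} > 0` such that: for every compact `Ω ⊂ ℝ^d` with a Borel
probability measure `μ`, every `B ≥ 1` and every `N`-dimensional subspace `X_N ⊂ C(Ω)` with
`‖f‖_∞ ≤ √(BN) ‖f‖_{L²(μ)}` on `X_N`, there are `m ≤ C Φ((BN)^{1/min{p,2}}) (log₂ 2BN)³`
points `x₁, …, x_m ∈ Ω` with `(1−ε)‖f‖_Φ ≤ ‖f‖_{Φ,x} ≤ (1+ε)‖f‖_Φ` for all `f ∈ X_N`. -/
theorem statement0 (p : ℝ) (hp : 1 ≤ p) (ε : ℝ) (hε0 : 0 < ε) (hε1 : ε < 1)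
    (Φ : ℝ → ℝ) (hpre : IsPhiPrefun Φ) (hphiw : ∃ a : ℝ, 1 ≤ a ∧ AIncP Φ 1 a)
    (hinc : IncP Φ p) (hdec : ∃ q : ℝ, p ≤ q ∧ DecQ Φ q) :
    ∃ C : ℝ, 0 < C ∧
      ∀ (d : ℕ) (Ω : Set (Fin d → ℝ)), IsCompact Ω →
      ∀ (μ : Measure Ω), IsProbabilityMeasure μ →
      ∀ B : ℝ, 1 ≤ B → ∀ N : ℕ, 1 ≤ N →
      ∀ X : Submodule ℝ (Ω → ℝ),
        (∀ f ∈ X, Continuous f) →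
        Module.finrank ℝ X = N →
        (∀ f ∈ X, supNorm f ≤ Real.sqrt (B * N) * Real.sqrt (∫ y, (f y) ^ 2 ∂μ)) →
        ∃ m : ℕ,
          (m : ℝ) ≤ C * Φ ((B * N) ^ (1 / min p 2)) * (Real.logb 2 (2 * B * N)) ^ 3 ∧
          ∃ x : Fin m → Ω, ∀ f ∈ X,
            (1 - ε) * luxNorm μ Φ f ≤ discLuxNorm Φ x f ∧
            discLuxNorm Φ x f ≤ (1 + ε) * luxNorm μ Φ f := by
  obtain ⟨q, hpq, hdec⟩ := hdec
  have hG := goodPhi_of hp hpre hinc hpq hdec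
  obtain ⟨C, hC, hmain⟩ := combine hG ε hε0 hε1.le
  refine ⟨C, hC, ?_⟩
  intro d Ω hΩ μ hμ B hB N hN X hX hfr hs
  haveI : CompactSpace Ω := isCompact_iff_compactSpace.1 hΩ
  obtain ⟨u, S, hu⟩ := coords μ B hB N hN X hX hfr hs
  obtain ⟨J, hJ, z, hz⟩ := hmain S
  refine ⟨2 ^ J, ?_, z, fun f hf => ?_⟩
  · push_cast
    rw [mul_assoc 2 B (N:ℝ)]
    exact hJ
  · obtain ⟨c, hc⟩ := hu f hf
    exact finish_one hG S ε hε0 _ z hz f c hc
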